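/- arXiv:1010.1969 — 6 statements merged into one kernel-verified Lean document; each statement's English description precedes it below -/
import Mathlib

section
/- Let d ≥ 1, ε > 0, and let u : ℝ^d → ℂ be a Schwartz function. Then for every x ∈ ℝ^d, u(x) = (2πε)^{-3d/2} ∫_{ℝ^d} ∫_{ℝ^d} ∫_{ℝ^d} 2^{d/2} e^{(i/ε) Φ₀(x,y,q,p)} u(y) dy dp dq, where the integral is the iterated integral (innermost in y, then p, then q) and Φ₀(x,y,q,p) = (i/2)|x−q|² + p·(x−q) + (i/2)|y−q|² − p·(y−q). -/
/-!
Since `p · (x - q) - p · (y - q) = p · (x - y)`, the kernel `exp (i Φ₀ / ε)` is the product of the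
Gaussians `exp (-|x - q|² / 2ε)` and `exp (-|y - q|² / 2ε)` and the semiclassical Fourier kernel
`exp (i p · (x - y) / ε)`. For fixed `q` the second Gaussian turns `u`, even if it is only of
temperate growth, into a Schwartz function of `y`, so Fourier inversion at scale `2πε` evaluates the
`p` and `y` integrals to `(2πε)^d exp (-|x - q|² / ε) u(x)`. The remaining `q` integral is Gaussian.
-/

open MeasureTheory

noncomputable section

open Module FourierTransform SchwartzMap
open scoped Nat ContDiff InnerProductSpace

section Gaussian

variable {F : Type*} [NormedAddCommGroup F]

theorem norm_iteratedFDeriv_exp_comp_le [NormedSpace ℝ F] {f : F → ℝ} {n : ℕ}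
    (hf : ContDiff ℝ n f) (x : F) {D : ℝ}
    (hD : ∀ i, 1 ≤ i → i ≤ n → ‖iteratedFDeriv ℝ i f x‖ ≤ D ^ i) :
    ‖iteratedFDeriv ℝ n (fun y ↦ Real.exp (f y)) x‖ ≤ n ! * Real.exp (f x) * D ^ n := by
  refine norm_iteratedFDeriv_comp_le Real.contDiff_exp hf le_rfl x (fun i _ ↦ ?_) hD
  simp [norm_iteratedFDeriv_eq_norm_iteratedDeriv, iteratedDeriv_eq_iterate]

theorem one_add_pow_le_mul_exp_mul_sq {b : ℝ} (hb : 0 < b) (m : ℕ) {r : ℝ} (hr : 0 ≤ r) :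
    (1 + r) ^ m ≤ m ! * (2 / b) ^ m * Real.exp b * Real.exp (b * r ^ 2) := by
  have h_exp : (b / 2 * (1 + r) ^ 2) ^ m / m ! ≤ Real.exp b * Real.exp (b * r ^ 2) :=
    calc (b / 2 * (1 + r) ^ 2) ^ m / m !
        ≤ Real.exp (b / 2 * (1 + r) ^ 2) := Real.pow_div_factorial_le_exp _ (by positivity) m
      _ ≤ Real.exp (b + b * r ^ 2) := by
        gcongr
        nlinarith [mul_nonneg hb.le (sq_nonneg (1 - r))]
      _ = Real.exp b * Real.exp (b * r ^ 2) := Real.exp_add _ _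
  calc (1 + r) ^ m
      ≤ ((1 + r) ^ 2) ^ m := by
        gcongr
        nlinarith
    _ = m ! * (2 / b) ^ m * ((b / 2 * (1 + r) ^ 2) ^ m / m !) := by
        rw [mul_pow (b / 2), div_pow, div_pow]
        field_simp
    _ ≤ m ! * (2 / b) ^ m * Real.exp b * Real.exp (b * r ^ 2) := by
        rw [mul_assoc _ (Real.exp b)]
        gcongr

variable [InnerProductSpace ℝ F]

theorem exists_norm_iteratedFDeriv_gaussian_le (b : ℝ) (n : ℕ) :
    ∃ (m : ℕ) (C : ℝ), 0 ≤ C ∧ ∀ x : F,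
      ‖iteratedFDeriv ℝ n (fun y : F ↦ Real.exp (-b * ‖y‖ ^ 2)) x‖ ≤
        C * (1 + ‖x‖) ^ m * Real.exp (-b * ‖x‖ ^ 2) := by
  have h_quad : (fun y : F ↦ -b * ‖y‖ ^ 2).HasTemperateGrowth := by fun_prop
  obtain ⟨k, C, hC, h_bound⟩ := h_quad.norm_iteratedFDeriv_le_uniform n
  refine ⟨k * n, n ! * (1 + C) ^ n, by positivity, fun x ↦ ?_⟩
  have h_base : 1 ≤ (1 + C) * (1 + ‖x‖) ^ k :=
    one_le_mul_of_one_le_of_one_le (by linarith) (one_le_pow₀ (by simp))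
  have h_deriv (i : ℕ) (hi : 1 ≤ i) (hin : i ≤ n) :
      ‖iteratedFDeriv ℝ i (fun y : F ↦ -b * ‖y‖ ^ 2) x‖ ≤ ((1 + C) * (1 + ‖x‖) ^ k) ^ i :=
    calc ‖iteratedFDeriv ℝ i (fun y : F ↦ -b * ‖y‖ ^ 2) x‖
        ≤ C * (1 + ‖x‖) ^ k := h_bound i hin x
      _ ≤ (1 + C) * (1 + ‖x‖) ^ k := by gcongr; linarith
      _ ≤ ((1 + C) * (1 + ‖x‖) ^ k) ^ i := le_self_pow₀ h_base (by lia)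
  calc ‖iteratedFDeriv ℝ n (fun y : F ↦ Real.exp (-b * ‖y‖ ^ 2)) x‖
      ≤ n ! * Real.exp (-b * ‖x‖ ^ 2) * ((1 + C) * (1 + ‖x‖) ^ k) ^ n :=
        norm_iteratedFDeriv_exp_comp_le (h_quad.1.of_le (by exact_mod_cast le_top)) x h_deriv
    _ = n ! * (1 + C) ^ n * (1 + ‖x‖) ^ (k * n) * Real.exp (-b * ‖x‖ ^ 2) := by
        rw [mul_pow (1 + C), ← pow_mul]
        ring

variable (F) in
/-- The Gaussian `x ↦ exp (-b ‖x‖²)`, `b > 0`, as a Schwartz function. -/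
def gaussianSchwartz (b : ℝ) (hb : 0 < b) : 𝓢(F, ℝ) where
  toFun x := Real.exp (-b * ‖x‖ ^ 2)
  smooth' := (contDiff_const.mul (contDiff_norm_sq ℝ)).exp
  decay' k n := by
    obtain ⟨m, C, hC, h_deriv⟩ := exists_norm_iteratedFDeriv_gaussian_le (F := F) b n
    refine ⟨C * ((k + m) ! * (2 / b) ^ (k + m) * Real.exp b), fun x ↦ ?_⟩
    calc ‖x‖ ^ k * ‖iteratedFDeriv ℝ n (fun y : F ↦ Real.exp (-b * ‖y‖ ^ 2)) x‖
        ≤ (1 + ‖x‖) ^ k * (C * (1 + ‖x‖) ^ m * Real.exp (-b * ‖x‖ ^ 2)) := by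
          gcongr
          · linarith
          · exact h_deriv x
      _ = C * ((1 + ‖x‖) ^ (k + m) * Real.exp (-b * ‖x‖ ^ 2)) := by ring
      _ ≤ C * ((k + m) ! * (2 / b) ^ (k + m) * Real.exp b * Real.exp (b * ‖x‖ ^ 2) *
            Real.exp (-b * ‖x‖ ^ 2)) := by
          gcongr
          exact one_add_pow_le_mul_exp_mul_sq hb (k + m) (norm_nonneg x)
      _ = C * ((k + m) ! * (2 / b) ^ (k + m) * Real.exp b) := by
          rw [mul_assoc _ (Real.exp (b * _)), ← Real.exp_add, neg_mul, add_neg_cancel,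
            Real.exp_zero, mul_one]

theorem exists_schwartzMap_eq_gaussian_smul {E : Type*} [NormedAddCommGroup E] [NormedSpace ℝ E]
    {u : F → E} (hu : u.HasTemperateGrowth) {b : ℝ} (hb : 0 < b) (q : F) :
    ∃ g : 𝓢(F, E), ∀ y, g y = Real.exp (-b * ‖y - q‖ ^ 2) • u y :=
  ⟨bilinLeftCLM (ContinuousLinearMap.lsmul ℝ ℝ) hu
    ((gaussianSchwartz F b hb).compSubConstCLM ℝ q), fun _ ↦ rfl⟩

end Gaussian

variable {V : Type*} [NormedAddCommGroup V] [InnerProductSpace ℝ V]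

/-- The phase `Φ₀` of the frozen Gaussian kernel: the product of the wave packet centred at
`(q, p)`, evaluated at `x`, with its complex conjugate, evaluated at `y`, is `exp (i Φ₀ / ε)`. -/
def wavePacketPhase (x y q p : V) : ℂ :=
  Complex.I / 2 * ((‖x - q‖ ^ 2 : ℝ) : ℂ) + ((⟪p, x - q⟫_ℝ : ℝ) : ℂ) +
    Complex.I / 2 * ((‖y - q‖ ^ 2 : ℝ) : ℂ) - ((⟪p, y - q⟫_ℝ : ℝ) : ℂ)

theorem exp_wavePacketPhase {ε : ℝ} (hε : ε ≠ 0) (x y q p : V) :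
    Complex.exp (Complex.I / ε * wavePacketPhase x y q p) =
      ((Real.exp (-(2 * ε)⁻¹ * ‖x - q‖ ^ 2) : ℝ) : ℂ) *
        (Complex.exp (Complex.I / ε * ((⟪p, x - y⟫_ℝ : ℝ) : ℂ)) *
          ((Real.exp (-(2 * ε)⁻¹ * ‖y - q‖ ^ 2) : ℝ) : ℂ)) := by
  have hε' : (ε : ℂ) ≠ 0 := by exact_mod_cast hε
  have h_inner : ⟪p, x - y⟫_ℝ = ⟪p, x - q⟫_ℝ - ⟪p, y - q⟫_ℝ := by
    rw [← inner_sub_right, sub_sub_sub_cancel_right]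
  rw [Complex.ofReal_exp, Complex.ofReal_exp, ← Complex.exp_add, ← Complex.exp_add, h_inner,
    wavePacketPhase]
  congr 1
  push_cast
  field_simp
  linear_combination ((‖x - q‖ : ℂ) ^ 2 + (‖y - q‖ : ℂ) ^ 2) * Complex.I_sq

variable [FiniteDimensional ℝ V] [MeasurableSpace V] [BorelSpace V]
  {E : Type*} [NormedAddCommGroup E] [NormedSpace ℂ E]

theorem integral_integral_exp_inner_smul [CompleteSpace E] {ε : ℝ} (hε : 0 < ε) {f : V → E}
    (hf : Integrable f) (hf' : Integrable (𝓕 f)) {x : V} (hx : ContinuousAt f x) :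
    ∫ p : V, ∫ y : V, Complex.exp (Complex.I / ε * ((⟪p, x - y⟫_ℝ : ℝ) : ℂ)) • f y =
      (2 * Real.pi * ε) ^ finrank ℝ V • f x := by
  have hε' : (ε : ℂ) ≠ 0 := by exact_mod_cast hε.ne'
  have h_scale : 0 < (2 * Real.pi * ε) ^ finrank ℝ V := by positivity
  have h_subst := Measure.integral_comp_smul (volume : Measure V)
    (fun p ↦ ∫ y : V, Complex.exp (Complex.I / ε * ((⟪p, x - y⟫_ℝ : ℝ) : ℂ)) • f y)
    (2 * Real.pi * ε)
  rw [abs_of_pos (inv_pos.2 h_scale), eq_inv_smul_iff₀ h_scale.ne'] at h_subst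
  rw [← h_subst, ← hf.fourierInv_fourier_eq hf' hx, Real.fourierInv_eq']
  congr! 3 with p
  rw [Real.fourier_eq', ← integral_smul]
  congr! 2 with y
  rw [smul_smul, ← Complex.exp_add, real_inner_smul_left, inner_sub_right, real_inner_comm p y]
  congr 2
  push_cast
  field_simp
  ring

theorem integral_exp_neg_mul_norm_sub_sq {b : ℝ} (hb : 0 < b) (x : V) :
    ∫ q : V, Real.exp (-b * ‖x - q‖ ^ 2) = (Real.pi / b) ^ (finrank ℝ V / 2 : ℝ) := by
  rw [integral_sub_left_eq_self (fun v : V ↦ Real.exp (-b * ‖v‖ ^ 2)) volume x,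
    GaussianFourier.integral_rexp_neg_mul_sq_norm hb]

variable [CompleteSpace E] {ε : ℝ} {u : V → E}

theorem integral_integral_exp_wavePacketPhase_smul (hε : 0 < ε) (hu : u.HasTemperateGrowth)
    (x q : V) :
    ∫ p : V, ∫ y : V, Complex.exp (Complex.I / ε * wavePacketPhase x y q p) • u y =
      Real.exp (-ε⁻¹ * ‖x - q‖ ^ 2) • (2 * Real.pi * ε) ^ finrank ℝ V • u x := by
  obtain ⟨g, hg⟩ := exists_schwartzMap_eq_gaussian_smul hu (b := (2 * ε)⁻¹) (by positivity) q
  have h_kernel (p y : V) : Complex.exp (Complex.I / ε * wavePacketPhase x y q p) • u y =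
      Real.exp (-(2 * ε)⁻¹ * ‖x - q‖ ^ 2) •
        Complex.exp (Complex.I / ε * ((⟪p, x - y⟫_ℝ : ℝ) : ℂ)) • g y := by
    rw [exp_wavePacketPhase hε.ne', hg, mul_smul, mul_smul, Complex.coe_smul, Complex.coe_smul]
  have h_gauss : Real.exp (-(2 * ε)⁻¹ * ‖x - q‖ ^ 2) * Real.exp (-(2 * ε)⁻¹ * ‖x - q‖ ^ 2) =
      Real.exp (-ε⁻¹ * ‖x - q‖ ^ 2) := by
    rw [← Real.exp_add]
    congr 1
    field_simp
    ring
  simp_rw [h_kernel, integral_smul]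
  rw [integral_integral_exp_inner_smul hε g.integrable (𝓕 g).integrable g.continuous.continuousAt,
    hg, smul_comm _ (Real.exp _), smul_smul, h_gauss]

theorem integral_exp_wavePacketPhase_smul (hε : 0 < ε) (hu : u.HasTemperateGrowth) (x : V) :
    ∫ q : V, ∫ p : V, ∫ y : V, Complex.exp (Complex.I / ε * wavePacketPhase x y q p) • u y =
      ((Real.pi * ε) ^ (finrank ℝ V / 2 : ℝ) * (2 * Real.pi * ε) ^ finrank ℝ V) • u x := by
  simp_rw [integral_integral_exp_wavePacketPhase_smul hε hu]
  rw [integral_smul_const, integral_exp_neg_mul_norm_sub_sq (inv_pos.2 hε), div_inv_eq_mul,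
    smul_smul]

theorem wavePacket_normalization (hε : 0 < ε) (n : ℕ) :
    (2 * Real.pi * ε) ^ (-(3 * (n : ℝ)) / 2) * ((2 : ℝ) ^ ((n : ℝ) / 2) *
      ((Real.pi * ε) ^ ((n : ℝ) / 2) * (2 * Real.pi * ε) ^ n)) = 1 := by
  have h_pos : 0 < 2 * Real.pi * ε := by positivity
  rw [← mul_assoc ((2 : ℝ) ^ _), ← Real.mul_rpow (by positivity) (by positivity), ← mul_assoc 2,
    ← Real.rpow_natCast, ← Real.rpow_add h_pos, ← Real.rpow_add h_pos,
    show -(3 * (n : ℝ)) / 2 + (n / 2 + n) = 0 by ring, Real.rpow_zero]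

theorem stmt_0_general (hε : 0 < ε) (hu : u.HasTemperateGrowth) (x : V) :
    u x = (2 * Real.pi * ε) ^ (-(3 * (finrank ℝ V : ℝ)) / 2) •
      ∫ q : V, ∫ p : V, ∫ y : V, (2 : ℝ) ^ ((finrank ℝ V : ℝ) / 2) •
        Complex.exp (Complex.I / ε * wavePacketPhase x y q p) • u y := by
  simp_rw [integral_smul]
  rw [integral_exp_wavePacketPhase_smul hε hu, smul_smul, smul_smul, mul_assoc,
    wavePacket_normalization hε, one_smul]

section Coordinates

variable {ι : Type*} [Fintype ι]

theorem integral_euclideanSpace_eq_integral_pi {G : Type*} [NormedAddCommGroup G]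
    [NormedSpace ℝ G] (f : EuclideanSpace ℝ ι → G) :
    ∫ v, f v = ∫ a : ι → ℝ, f (WithLp.toLp 2 a) :=
  ((PiLp.volume_preserving_toLp ι).integral_comp
    (MeasurableEquiv.toLp 2 (ι → ℝ)).measurableEmbedding f).symm

theorem wavePacketPhase_toLp (x y q p : ι → ℝ) :
    wavePacketPhase (WithLp.toLp 2 x) (WithLp.toLp 2 y) (WithLp.toLp 2 q) (WithLp.toLp 2 p) =
      Complex.I / 2 * ((∑ i, (x i - q i) ^ 2 : ℝ) : ℂ) + ((∑ i, p i * (x i - q i) : ℝ) : ℂ) +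
        Complex.I / 2 * ((∑ i, (y i - q i) ^ 2 : ℝ) : ℂ) -
          ((∑ i, p i * (y i - q i) : ℝ) : ℂ) := by
  simp [wavePacketPhase, EuclideanSpace.norm_sq_eq, PiLp.inner_apply, mul_comm]

end Coordinates

/-- The frozen Gaussian (FBI / wave packet) reconstruction identity:
for a Schwartz function `u` on `ℝ^d` and `ε > 0`,
`u x = (2πε)^{-3d/2} ∫∫∫ 2^{d/2} e^{(i/ε)Φ₀(x,y,q,p)} u(y) dy dp dq`. -/
theorem stmt_0 (d : ℕ) (hd : 1 ≤ d) (ε : ℝ) (hε : 0 < ε)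
    (u : SchwartzMap (Fin d → ℝ) ℂ) (x : Fin d → ℝ) :
    u x = (((2 * Real.pi * ε) ^ (-(3 * (d : ℝ)) / 2) : ℝ) : ℂ) *
      ∫ q : Fin d → ℝ, ∫ p : Fin d → ℝ, ∫ y : Fin d → ℝ,
        (((2 : ℝ) ^ ((d : ℝ) / 2) : ℝ) : ℂ) *
          Complex.exp ((Complex.I / (ε : ℂ)) *
            ((Complex.I / 2) * ((∑ i, (x i - q i) ^ 2 : ℝ) : ℂ)
              + ((∑ i, p i * (x i - q i) : ℝ) : ℂ)
              + (Complex.I / 2) * ((∑ i, (y i - q i) ^ 2 : ℝ) : ℂ)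
              - ((∑ i, p i * (y i - q i) : ℝ) : ℂ))) * u y := by
  have hu : (fun v : EuclideanSpace ℝ (Fin d) ↦ u v.ofLp).HasTemperateGrowth :=
    u.hasTemperateGrowth.comp (EuclideanSpace.equiv (Fin d) ℝ).hasTemperateGrowth
  simpa only [integral_euclideanSpace_eq_integral_pi, wavePacketPhase_toLp,
    finrank_euclideanSpace_fin, Complex.real_smul, smul_eq_mul, mul_assoc]
    using stmt_0_general hε hu (WithLp.toLp 2 x)
end
end

section
/- Let H : ℝ^d × ℝ^d → ℝ be smooth, and suppose (Q, P) : [0,T] × ℝ^d × ℝ^d → ℝ^d × ℝ^d is jointly smooth and solves the Hamiltonian system ∂_t Q(t,q,p) = ∂_P H(Q,P), ∂_t P(t,q,p) = −∂_Q H(Q,P) with Q(0,q,p) = q, P(0,q,p) = p. Let S : [0,T] × ℝ^d × ℝ^d → ℝ be jointly smooth with ∂_t S(t,q,p) = P(t,q,p)·∂_P H(Q(t,q,p),P(t,q,p)) − H(Q(t,q,p),P(t,q,p)) and S(0,q,p) = 0. Then for all t ∈ [0,T], (q,p) ∈ ℝ^{2d} and all indices i = 1,…,d: ∂_{q_i}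 S(t,q,p) = Σ_j (∂_{q_i} Q_j(t,q,p)) P_j(t,q,p) − p_i and ∂_{p_i} S(t,q,p) = Σ_j (∂_{p_i} Q_j(t,q,p)) P_j(t,q,p). -/
noncomputable section

/-!
In differential-form language, Hamilton's equations together with `∂ₜS = P · ∂ₜQ - H` say that
`dS = P · dQ - H dt - p · dq`. For a fixed variation `w` of the initial data, the defect
`∂_w S - ⟨∂_w Q, P⟩` is conserved in time: exchanging `∂ₜ` and `∂_w`,
`∂ₜ ∂_w S = ∂_w (⟨∂ₜQ, P⟩ - H(Q, P)) = ⟨∂_w ∂ₜQ, P⟩ + ⟨∂ₜQ, ∂_w P⟩ - dH(∂_w Q, ∂_w P)`,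
and by Hamilton's equations the last two terms add up to `⟨∂_w Q, ∂ₜP⟩`, so that
`∂ₜ ∂_w S = ∂ₜ ⟨∂_w Q, P⟩`. At time `0` the defect for `w = (a, b)` is `-⟨a, p⟩`.
-/

section PartialDerivatives

variable {𝕜 X Y G : Type*} [NontriviallyNormedField 𝕜] [NormedAddCommGroup X] [NormedSpace 𝕜 X]
  [NormedAddCommGroup Y] [NormedSpace 𝕜 Y] [NormedAddCommGroup G] [NormedSpace 𝕜 G]

theorem hasFDerivAt_slice_right {f : X × Y → G} {x : X} {y : Y}
    (hf : DifferentiableAt 𝕜 f (x, y)) :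
    HasFDerivAt (fun y => f (x, y)) (fderiv 𝕜 f (x, y) ∘L .inr 𝕜 X Y) y :=
  hf.hasFDerivAt.comp y (hasFDerivAt_prodMk_right x y)

theorem hasDerivAt_slice_left {f : 𝕜 × Y → G} {t : 𝕜} {y : Y}
    (hf : DifferentiableAt 𝕜 f (t, y)) :
    HasDerivAt (fun s => f (s, y)) (fderiv 𝕜 f (t, y) (1, 0)) t :=
  hf.hasFDerivAt.comp_hasDerivAt t ((hasDerivAt_id t).prodMk (hasDerivAt_const t y))

theorem differentiable_fderiv_apply {f : X → G} (hf : ContDiff 𝕜 2 f) (v : X) :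
    Differentiable 𝕜 fun x => fderiv 𝕜 f x v :=
  ((hf.fderiv_right (m := 1) (by norm_num)).differentiable one_ne_zero).clm_apply
    (differentiable_const v)

theorem fderiv_fderiv_apply_comm [IsRCLikeNormedField 𝕜] {f : X → G} (hf : ContDiff 𝕜 2 f)
    (x u v : X) :
    fderiv 𝕜 (fun y => fderiv 𝕜 f y u) x v = fderiv 𝕜 (fun y => fderiv 𝕜 f y v) x u := by
  have hf' : DifferentiableAt 𝕜 (fderiv 𝕜 f) x :=
    (hf.fderiv_right (m := 1) (by norm_num)).differentiable one_ne_zero x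
  have hsymm : IsSymmSndFDerivAt 𝕜 f x := hf.contDiffAt.isSymmSndFDerivAt (by simp)
  simpa [fderiv_clm_apply hf' (differentiableAt_const _)] using hsymm v u

theorem hasDerivAt_fderiv_slice_right [IsRCLikeNormedField 𝕜] {f : 𝕜 × Y → G}
    (hf : ContDiff 𝕜 2 f) (t : 𝕜) (y w : Y) :
    HasDerivAt (fun s => fderiv 𝕜 f (s, y) (0, w))
      (fderiv 𝕜 (fun y' => fderiv 𝕜 f (t, y') (1, 0)) y w) t := by
  have hleft := hasDerivAt_slice_left (differentiable_fderiv_apply hf (0, w) (t, y))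
  have hright := hasFDerivAt_slice_right (differentiable_fderiv_apply hf (1, 0) (t, y))
  rw [fderiv_fderiv_apply_comm hf] at hleft
  simpa [hright.fderiv] using hleft

end PartialDerivatives

section ActionVariation

variable {E F Z : Type*} [NormedAddCommGroup E] [NormedSpace ℝ E]
  [NormedAddCommGroup F] [NormedSpace ℝ F] [NormedAddCommGroup Z] [NormedSpace ℝ Z]

/-- `v` is a Hamiltonian vector of `H` at `x`: contracting the symplectic form
`ω(v, δ) = ⟨v₁, δ₂⟩ - ⟨δ₁, v₂⟩` with `v` gives `dH(x)`. The phase space is `E × F`, with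
configurations in `E`, momenta in `F` and a pairing `B`, possibly degenerate, in place of the
duality of `E` and `E*`. -/
def IsHamiltonianVector (B : E →L[ℝ] F →L[ℝ] ℝ) (H : E × F → ℝ) (x v : E × F) : Prop :=
  ∀ δ : E × F, fderiv ℝ H x δ = B v.1 δ.2 - B δ.1 v.2

/-- The integrand `⟨∂ₜQ, P⟩ - H(Q, P)` of the action, at the point `x = (t, z)` of a family
`(Q, P)` of phase-space curves with parameter `z`. -/
def actionRate (B : E →L[ℝ] F →L[ℝ] ℝ) (H : E × F → ℝ) (Q : ℝ × Z → E) (P : ℝ × Z → F)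
    (x : ℝ × Z) : ℝ :=
  B (fderiv ℝ Q x (1, 0)) (P x) - H (Q x, P x)

variable {B : E →L[ℝ] F →L[ℝ] ℝ} {H : E × F → ℝ} {Q : ℝ × Z → E} {P : ℝ × Z → F}
  {S : ℝ × Z → ℝ} {t : ℝ} {z : Z}

theorem fderiv_actionRate (hH : DifferentiableAt ℝ H (Q (t, z), P (t, z))) (hQ : ContDiff ℝ 2 Q)
    (hP : DifferentiableAt ℝ P (t, z))
    (hflow : IsHamiltonianVector B H (Q (t, z), P (t, z))
      (fderiv ℝ Q (t, z) (1, 0), fderiv ℝ P (t, z) (1, 0))) (w : Z) :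
    fderiv ℝ (fun y => actionRate B H Q P (t, y)) z w
      = B (fderiv ℝ Q (t, z) (0, w)) (fderiv ℝ P (t, z) (1, 0))
        + B (fderiv ℝ (fun y => fderiv ℝ Q (t, y) (1, 0)) z w) (P (t, z)) := by
  have hQz := hasFDerivAt_slice_right (hQ.differentiable two_ne_zero (t, z))
  have hPz := hasFDerivAt_slice_right hP
  have hQt := (hasFDerivAt_slice_right
    (differentiable_fderiv_apply hQ (1, 0) (t, z))).differentiableAt.hasFDerivAt
  have hrate : HasFDerivAt (fun y => actionRate B H Q P (t, y)) _ z :=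
    (B.hasFDerivAt_of_bilinear hQt hPz).sub (hH.hasFDerivAt.comp z (hQz.prodMk hPz))
  have hdH := hflow (fderiv ℝ Q (t, z) (0, w), fderiv ℝ P (t, z) (0, w))
  calc fderiv ℝ (fun y => actionRate B H Q P (t, y)) z w
      = B (fderiv ℝ Q (t, z) (1, 0)) (fderiv ℝ P (t, z) (0, w))
          + B (fderiv ℝ (fun y => fderiv ℝ Q (t, y) (1, 0)) z w) (P (t, z))
          - fderiv ℝ H (Q (t, z), P (t, z))
              (fderiv ℝ Q (t, z) (0, w), fderiv ℝ P (t, z) (0, w)) := by simp [hrate.fderiv]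
    _ = B (fderiv ℝ Q (t, z) (0, w)) (fderiv ℝ P (t, z) (1, 0))
          + B (fderiv ℝ (fun y => fderiv ℝ Q (t, y) (1, 0)) z w) (P (t, z)) := by rw [hdH]; ring

theorem hasDerivAt_fderiv_action_sub_pairing
    (hH : DifferentiableAt ℝ H (Q (t, z), P (t, z))) (hQ : ContDiff ℝ 2 Q)
    (hP : DifferentiableAt ℝ P (t, z)) (hS : ContDiff ℝ 2 S)
    (hflow : IsHamiltonianVector B H (Q (t, z), P (t, z))
      (fderiv ℝ Q (t, z) (1, 0), fderiv ℝ P (t, z) (1, 0)))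
    (hSt : ∀ y, fderiv ℝ S (t, y) (1, 0) = actionRate B H Q P (t, y)) (w : Z) :
    HasDerivAt (fun s => fderiv ℝ S (s, z) (0, w) - B (fderiv ℝ Q (s, z) (0, w)) (P (s, z)))
      0 t := by
  have haction := hasDerivAt_fderiv_slice_right hS t z w
  have hpairing := B.hasDerivAt_of_bilinear (fun _ => hasDerivAt_fderiv_slice_right hQ t z w)
    (fun _ => hasDerivAt_slice_left hP)
  rw [funext hSt, fderiv_actionRate hH hQ hP hflow] at haction
  exact (haction.sub hpairing).congr_deriv (sub_self _)

theorem fderiv_action_sub_pairing_eq_initial {T : ℝ}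
    (hH : Differentiable ℝ H) (hQ : ContDiff ℝ 2 Q) (hP : Differentiable ℝ P)
    (hS : ContDiff ℝ 2 S)
    (hflow : ∀ t ∈ Set.Icc 0 T, IsHamiltonianVector B H (Q (t, z), P (t, z))
      (fderiv ℝ Q (t, z) (1, 0), fderiv ℝ P (t, z) (1, 0)))
    (hSt : ∀ t ∈ Set.Icc 0 T, ∀ y, fderiv ℝ S (t, y) (1, 0) = actionRate B H Q P (t, y))
    (ht : t ∈ Set.Icc 0 T) (w : Z) :
    fderiv ℝ S (t, z) (0, w) - B (fderiv ℝ Q (t, z) (0, w)) (P (t, z))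
      = fderiv ℝ S (0, z) (0, w) - B (fderiv ℝ Q (0, z) (0, w)) (P (0, z)) := by
  have hderiv (s) (hs : s ∈ Set.Icc 0 T) :=
    hasDerivAt_fderiv_action_sub_pairing (hH _) hQ (hP _) hS (hflow s hs) (hSt s hs) w
  exact constant_of_has_deriv_right_zero
    (fun s hs => (hderiv s hs).continuousAt.continuousWithinAt)
    (fun s hs => (hderiv s (Set.Ico_subset_Icc_self hs)).hasDerivWithinAt) t ht

end ActionVariation

section InitialConditions

variable {E F : Type*} [NormedAddCommGroup E] [NormedSpace ℝ E]
  [NormedAddCommGroup F] [NormedSpace ℝ F]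

theorem stmt_1_general {T : ℝ} {B : E →L[ℝ] F →L[ℝ] ℝ} {H : E × F → ℝ}
    {Q : ℝ × E × F → E} {P : ℝ × E × F → F} {S : ℝ × E × F → ℝ}
    (hH : Differentiable ℝ H) (hQ : ContDiff ℝ 2 Q) (hP : Differentiable ℝ P)
    (hS : ContDiff ℝ 2 S)
    (hflow : ∀ t ∈ Set.Icc 0 T, ∀ z, IsHamiltonianVector B H (Q (t, z), P (t, z))
      (fderiv ℝ Q (t, z) (1, 0), fderiv ℝ P (t, z) (1, 0)))
    (hSt : ∀ t ∈ Set.Icc 0 T, ∀ z, fderiv ℝ S (t, z) (1, 0) = actionRate B H Q P (t, z))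
    (hQ0 : ∀ z, Q (0, z) = z.1) (hP0 : ∀ z, P (0, z) = z.2) (hS0 : ∀ z, S (0, z) = 0)
    {t : ℝ} (ht : t ∈ Set.Icc 0 T) (q : E) (p : F) (a : E) (b : F) :
    fderiv ℝ S (t, q, p) (0, a, b)
      = B (fderiv ℝ Q (t, q, p) (0, a, b)) (P (t, q, p)) - B a p := by
  have hS_init : fderiv ℝ S (0, q, p) (0, a, b) = 0 := by
    have hslice := hasFDerivAt_slice_right (hS.differentiable two_ne_zero (0, q, p))
    simpa [hS0] using (DFunLike.congr_fun hslice.fderiv (a, b)).symm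
  have hQ_init : fderiv ℝ Q (0, q, p) (0, a, b) = a := by
    have hslice := hasFDerivAt_slice_right (hQ.differentiable two_ne_zero (0, q, p))
    simpa [hQ0, fderiv_fst] using (DFunLike.congr_fun hslice.fderiv (a, b)).symm
  have hconserved := fderiv_action_sub_pairing_eq_initial hH hQ hP hS
    (fun s hs => hflow s hs (q, p)) hSt ht (a, b)
  rw [hS_init, hQ_init, hP0, zero_sub] at hconserved
  linarith

end InitialConditions

section Coordinates

variable {ι : Type*} [Fintype ι]

/-- The dot product as a continuous bilinear pairing, used to identify momenta in `ι → ℝ` with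
covectors. -/
def dotProductPairing (ι : Type*) [Fintype ι] : (ι → ℝ) →L[ℝ] (ι → ℝ) →L[ℝ] ℝ :=
  (dotProductBilin ℝ ℝ).toContinuousBilinearMap

@[simp]
theorem dotProductPairing_apply (a b : ι → ℝ) : dotProductPairing ι a b = a ⬝ᵥ b := rfl

theorem apply_single_dotProduct {R : Type*} [CommSemiring R] [DecidableEq ι]
    (f : Module.Dual R (ι → R)) (a : ι → R) : (fun j => f (Pi.single j 1)) ⬝ᵥ a = f a :=
  DFunLike.congr_fun ((dotProductEquiv R ι).apply_symm_apply f) a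

theorem isHamiltonianVector_dotProductPairing [DecidableEq ι]
    {H : (ι → ℝ) × (ι → ℝ) → ℝ} {x v : (ι → ℝ) × (ι → ℝ)}
    (hv₁ : ∀ j, v.1 j = fderiv ℝ H x (0, Pi.single j 1))
    (hv₂ : ∀ j, v.2 j = -fderiv ℝ H x (Pi.single j 1, 0)) :
    IsHamiltonianVector (dotProductPairing ι) H x v := by
  rintro ⟨a, b⟩
  have hposition : fderiv ℝ H x (a, 0) = -(a ⬝ᵥ v.2) := by
    have hv₂' : -v.2 = fun j => fderiv ℝ H x (Pi.single j 1, 0) :=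
      funext fun j => by simp [hv₂ j]
    rw [← dotProduct_neg, dotProduct_comm, hv₂']
    exact (apply_single_dotProduct (fderiv ℝ H x ∘L .inl ℝ _ _).toLinearMap a).symm
  have hmomentum : fderiv ℝ H x (0, b) = v.1 ⬝ᵥ b := by
    rw [funext hv₁]
    exact (apply_single_dotProduct (fderiv ℝ H x ∘L .inr ℝ _ _).toLinearMap b).symm
  calc fderiv ℝ H x (a, b) = fderiv ℝ H x (a, 0) + fderiv ℝ H x (0, b) := by simp [← map_add]
    _ = v.1 ⬝ᵥ b - a ⬝ᵥ v.2 := by rw [hposition, hmomentum]; ring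

end Coordinates

/-- Along the Hamiltonian flow `(Q,P)` with Hamiltonian `H` and the associated
action `S` (with `∂ₜS = P·∂_P H − H`, `S(0)=0`), one has, for all `t ∈ [0,T]` and all `i`,
`∂_{qᵢ} S = Σ_j (∂_{qᵢ} Q_j) P_j − pᵢ` and `∂_{pᵢ} S = Σ_j (∂_{pᵢ} Q_j) P_j`. -/
theorem stmt_1 (d : ℕ) (T : ℝ) (hT : 0 < T)
    (H : (Fin d → ℝ) × (Fin d → ℝ) → ℝ)
    (Q P : ℝ × (Fin d → ℝ) × (Fin d → ℝ) → Fin d → ℝ)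
    (S : ℝ × (Fin d → ℝ) × (Fin d → ℝ) → ℝ)
    (hH : ContDiff ℝ (⊤ : ℕ∞) H)
    (hQ : ContDiff ℝ (⊤ : ℕ∞) Q) (hP : ContDiff ℝ (⊤ : ℕ∞) P) (hS : ContDiff ℝ (⊤ : ℕ∞) S)
    (hQt : ∀ t ∈ Set.Icc (0:ℝ) T, ∀ q p : Fin d → ℝ, ∀ j : Fin d,
      fderiv ℝ Q (t, q, p) (1, 0, 0) j
        = fderiv ℝ H (Q (t, q, p), P (t, q, p)) (0, Pi.single j 1))
    (hPt : ∀ t ∈ Set.Icc (0:ℝ) T, ∀ q p : Fin d → ℝ, ∀ j : Fin d,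
      fderiv ℝ P (t, q, p) (1, 0, 0) j
        = - fderiv ℝ H (Q (t, q, p), P (t, q, p)) (Pi.single j 1, 0))
    (hQ0 : ∀ q p : Fin d → ℝ, Q (0, q, p) = q)
    (hP0 : ∀ q p : Fin d → ℝ, P (0, q, p) = p)
    (hSt : ∀ t ∈ Set.Icc (0:ℝ) T, ∀ q p : Fin d → ℝ,
      fderiv ℝ S (t, q, p) (1, 0, 0)
        = (∑ j, P (t, q, p) j * fderiv ℝ H (Q (t, q, p), P (t, q, p)) (0, Pi.single j 1))
          - H (Q (t, q, p), P (t, q, p)))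
    (hS0 : ∀ q p : Fin d → ℝ, S (0, q, p) = 0) :
    ∀ t ∈ Set.Icc (0:ℝ) T, ∀ q p : Fin d → ℝ, ∀ i : Fin d,
      fderiv ℝ S (t, q, p) (0, Pi.single i 1, 0)
        = (∑ j, fderiv ℝ Q (t, q, p) (0, Pi.single i 1, 0) j * P (t, q, p) j) - p i
      ∧ fderiv ℝ S (t, q, p) (0, 0, Pi.single i 1)
        = ∑ j, fderiv ℝ Q (t, q, p) (0, 0, Pi.single i 1) j * P (t, q, p) j := by
  intro t ht q p i
  have htwo : (2 : WithTop ℕ∞) ≤ (⊤ : ℕ∞) := WithTop.coe_le_coe.2 le_top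
  have hflow (s) (hs : s ∈ Set.Icc 0 T) (z) :
      IsHamiltonianVector (dotProductPairing (Fin d)) H (Q (s, z), P (s, z))
        (fderiv ℝ Q (s, z) (1, 0), fderiv ℝ P (s, z) (1, 0)) :=
    isHamiltonianVector_dotProductPairing (hQt s hs z.1 z.2) (hPt s hs z.1 z.2)
  have haction (s) (hs : s ∈ Set.Icc 0 T) (z) :
      fderiv ℝ S (s, z) (1, 0) = actionRate (dotProductPairing (Fin d)) H Q P (s, z) := by
    have hrate := hSt s hs z.1 z.2
    simp only [← hQt s hs] at hrate
    rwa [actionRate, dotProductPairing_apply, dotProduct_comm]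
  have hvariation := stmt_1_general (hH.differentiable (by simp)) (hQ.of_le htwo)
    (hP.differentiable (by simp)) (hS.of_le htwo) hflow haction
    (fun _ => hQ0 _ _) (fun _ => hP0 _ _) (fun _ => hS0 _ _) ht q p
  constructor
  · simpa only [dotProductPairing_apply, single_one_dotProduct] using! hvariation (Pi.single i 1) 0
  · simpa only [map_zero, zero_apply, sub_zero] using!
      hvariation 0 (Pi.single i 1)
end
end

section
/- Let A, B, C, D be real d × d matrices such that the 2d × 2d block matrix M = [[A, B], [C, D]] is symplectic, i.e. Mᵀ J M = J where J = [[0, I_d], [−I_d, 0]]. Then the complex d × d matrix Z = (A + D) + i(C − B) is invertible. -/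
open Matrix

noncomputable section

/-! Let `V = (1, -i)ᵀ`, whose columns span the `i`-eigenspace of `J` (with the sign convention
of `Matrix.J`). Then `Vᴴ V = 2`, `V Vᴴ = 1 - i J`, and `Z = Vᴴ M V`. If `M` preserves `J`, then
`Zᴴ Z = (M V)ᴴ (1 - i J) (M V) = (M V)ᴴ (M V) - i Vᴴ J V = (M V)ᴴ (M V) + 2`, which is positive
definite. -/

section Symplectic

variable {n R : Type*} [Fintype n] [DecidableEq n] [CommRing R]

theorem mem_symplecticGroup_iff_transpose_mul_fromBlocks_mul {M : Matrix (n ⊕ n) (n ⊕ n) R} :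
    M ∈ symplecticGroup n R ↔
      Mᵀ * fromBlocks 0 1 (-1) 0 * M = fromBlocks 0 1 (-1) 0 := by
  have neg_J : fromBlocks 0 1 (-1) 0 = -J n R := by simp [J, fromBlocks_neg]
  rw [SymplecticGroup.mem_iff', neg_J, Matrix.mul_neg, Matrix.neg_mul, neg_inj]

theorem conjTranspose_map_ofReal_mul_J_mul_map_ofReal {M : Matrix (n ⊕ n) (n ⊕ n) ℝ}
    (hM : M ∈ symplecticGroup n ℝ) :
    (M.map Complex.ofReal)ᴴ * J n ℂ * M.map Complex.ofReal = J n ℂ := by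
  have conj_eq_transpose : (M.map Complex.ofReal)ᴴ = (M.map Complex.ofReal)ᵀ := by
    ext i j
    simp
  have map_mem : M.map Complex.ofReal ∈ symplecticGroup n ℂ :=
    SymplecticGroup.map_mem hM Complex.ofRealHom
  rw [conj_eq_transpose, SymplecticGroup.mem_iff'.mp map_mem]

end Symplectic

section Eigenframe

variable (n : Type*) [DecidableEq n]

/-- The block column `(1, -i)ᵀ`. Its columns form an orthogonal basis of the eigenspace of `J` for
the eigenvalue `i`, each vector having squared norm `2`. -/
def eigenframeJ : Matrix (n ⊕ n) n ℂ :=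
  fromRows 1 (-Complex.I • 1)

theorem conjTranspose_eigenframeJ :
    (eigenframeJ n)ᴴ = fromCols 1 (Complex.I • 1) := by
  simp [eigenframeJ, conjTranspose_fromRows_eq_fromCols_conjTranspose]

variable [Fintype n]

theorem J_mul_eigenframeJ : J n ℂ * eigenframeJ n = Complex.I • eigenframeJ n := by
  rw [J, eigenframeJ, fromBlocks_mul_fromRows]
  ext (i | i) j <;> simp [← mul_assoc]

theorem conjTranspose_eigenframeJ_mul_self : (eigenframeJ n)ᴴ * eigenframeJ n = 2 := by
  rw [conjTranspose_eigenframeJ, eigenframeJ, fromCols_mul_fromRows]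
  simp [smul_smul, one_add_one_eq_two]

theorem eigenframeJ_mul_conjTranspose_self :
    eigenframeJ n * (eigenframeJ n)ᴴ = 1 - Complex.I • J n ℂ := by
  rw [conjTranspose_eigenframeJ, eigenframeJ, fromRows_mul_fromCols, J, ← fromBlocks_one,
    fromBlocks_smul, sub_eq_add_neg, fromBlocks_neg, fromBlocks_add]
  simp [smul_smul]

variable {n}

/-- The compression `Vᴴ M V` of `M` to the `i`-eigenspace of `J`, where `V = eigenframeJ n`. The
basis `V` is not normalised, so this is twice the compression in an orthonormal basis. -/
def compressionJ (M : Matrix (n ⊕ n) (n ⊕ n) ℂ) : Matrix n n ℂ :=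
  (eigenframeJ n)ᴴ * M * eigenframeJ n

theorem compressionJ_fromBlocks (A B C D : Matrix n n ℂ) :
    compressionJ (fromBlocks A B C D) = A + D + Complex.I • (C - B) := by
  rw [compressionJ, conjTranspose_eigenframeJ, eigenframeJ, fromCols_mul_fromBlocks,
    fromCols_mul_fromRows]
  simp only [Matrix.one_mul, Matrix.mul_one, Matrix.smul_mul, Matrix.mul_smul, smul_add, smul_smul,
    neg_mul, Complex.I_mul_I, neg_neg, one_smul]
  module

theorem conjTranspose_compressionJ_mul_self {M : Matrix (n ⊕ n) (n ⊕ n) ℂ}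
    (hM : Mᴴ * J n ℂ * M = J n ℂ) :
    (compressionJ M)ᴴ * compressionJ M = (M * eigenframeJ n)ᴴ * (M * eigenframeJ n) + 2 := by
  rw [compressionJ]
  set V := eigenframeJ n
  calc
    (Vᴴ * M * V)ᴴ * (Vᴴ * M * V) = (M * V)ᴴ * (V * Vᴴ) * (M * V) := by
      simp only [conjTranspose_mul, conjTranspose_conjTranspose, Matrix.mul_assoc]
    _ = (M * V)ᴴ * (M * V) - Complex.I • (Vᴴ * (Mᴴ * J n ℂ * M) * V) := by
      rw [eigenframeJ_mul_conjTranspose_self, conjTranspose_mul]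
      simp only [Matrix.mul_sub, Matrix.sub_mul, Matrix.mul_one, Matrix.mul_smul, Matrix.smul_mul,
        Matrix.mul_assoc]
    _ = (M * V)ᴴ * (M * V) + 2 := by
      rw [hM, Matrix.mul_assoc, J_mul_eigenframeJ, Matrix.mul_smul, smul_smul, Complex.I_mul_I,
        neg_one_smul, sub_neg_eq_add, conjTranspose_eigenframeJ_mul_self]

open scoped ComplexOrder in
theorem isUnit_compressionJ {M : Matrix (n ⊕ n) (n ⊕ n) ℂ} (hM : Mᴴ * J n ℂ * M = J n ℂ) :
    IsUnit (compressionJ M) := by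
  have posDef_two : (2 : Matrix n n ℂ).PosDef := by
    rw [← one_add_one_eq_two]
    exact PosDef.one.add PosDef.one
  have posDef_gram : ((compressionJ M)ᴴ * compressionJ M).PosDef := by
    rw [conjTranspose_compressionJ_mul_self hM]
    exact PosDef.posSemidef_add (posSemidef_conjTranspose_mul_self _) posDef_two
  exact isUnit_of_mul_isUnit_right posDef_gram.isUnit

theorem stmt_2_general {A B C D : Matrix n n ℂ}
    (hM : (fromBlocks A B C D)ᴴ * J n ℂ * fromBlocks A B C D = J n ℂ) :
    IsUnit (A + D + Complex.I • (C - B)) := by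
  rw [← compressionJ_fromBlocks]
  exact isUnit_compressionJ hM

end Eigenframe

/-- If the block matrix `M = [[A,B],[C,D]]` is symplectic (`Mᵀ J M = J` with
`J = [[0,I],[−I,0]]`), then the complex matrix `Z = (A+D) + i(C−B)` is invertible. -/
theorem stmt_2 (d : ℕ) (A B C D : Matrix (Fin d) (Fin d) ℝ)
    (hM : (Matrix.fromBlocks A B C D)ᵀ * Matrix.fromBlocks (0 : Matrix (Fin d) (Fin d) ℝ) 1 (-1) 0
            * Matrix.fromBlocks A B C D
          = Matrix.fromBlocks (0 : Matrix (Fin d) (Fin d) ℝ) 1 (-1) 0) :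
    IsUnit ((A + D).map (fun a => (a : ℂ)) + Complex.I • (C - B).map (fun a => (a : ℂ))) := by
  have hJ := conjTranspose_map_ofReal_mul_J_mul_map_ofReal
    (mem_symplecticGroup_iff_transpose_mul_fromBlocks_mul.mpr hM)
  rw [fromBlocks_map] at hJ
  simpa only [Matrix.map_add _ Complex.ofReal_add, Matrix.map_sub _ Complex.ofReal_sub]
    using stmt_2_general hJ
end
end

section
/- Let H : ℝ^d × ℝ^d → ℝ be smooth and let (Q,P) : [0,T] × ℝ^{2d} → ℝ^{2d} be the jointly smooth Hamiltonian flow with Hamiltonian H. Let φ = (φ_1,…,φ_d) : [0,T] × ℝ^d × ℝ^d → ℂ^d be smooth, satisfy the Liouville equation ∂_t φ + ∂_P H · ∂_Q φ − ∂_Q H · ∂_P φ = 0 componentwise on [0,T] × ℝ^{2d}, and have initial data φ_j(0, Q, P) = P_j + i Q_j for all (Q,P) ∈ ℝ^{2d}. Then for all t ∈ [0,T], (q,p) ∈ ℝ^{2d} and all indices k, j: (∂_{q_k} − i∂_{p_k}) Q_j(t,q,p) = (∂_{P_j} φ_k)(t, Q(t,q,p), P(t,q,p)) and (∂_{q_k}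 − i∂_{p_k}) P_j(t,q,p) = − (∂_{Q_j} φ_k)(t, Q(t,q,p), P(t,q,p)). -/
noncomputable section

/-!
Let `Φ = (Q, P)` and let `ω` be the canonical symplectic form. Each `φ_k` is constant along the
flow, so `φ_k(t, Φ(t, z)) = φ_k(0, z) = ω(a, z) - i ω(b, z)`, where `a` and `b` are the coordinate
vectors of `q_k` and `p_k`. Differentiating in `z` gives `Dφ_k(DΦ u) = ω(a, u) - i ω(b, u)`. Since
`DΦ` is symplectic, the right-hand side is `ω(DΦ a, DΦ u) - i ω(DΦ b, DΦ u)`, and since `DΦ` is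
onto, `DΦ u` may be replaced by an arbitrary vector `w`. If `w` is a coordinate vector, `ω(DΦ a, w)`
and `ω(DΦ b, w)` are, up to sign, components of `∂_{q_k} Φ` and `∂_{p_k} Φ`.
-/

open Set ContinuousLinearMap

section Calculus

variable {V W : Type*} [NormedAddCommGroup V] [NormedSpace ℝ V]
  [NormedAddCommGroup W] [NormedSpace ℝ W]

theorem eq_initial_of_hasDerivAt_zero {g : ℝ → W} {T : ℝ}
    (hg : ∀ t ∈ Icc 0 T, HasDerivAt g 0 t) {t : ℝ} (ht : t ∈ Icc 0 T) : g t = g 0 :=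
  constant_of_has_deriv_right_zero (fun s hs => (hg s hs).continuousAt.continuousWithinAt)
    (fun s hs => (hg s (Ico_subset_Icc_self hs)).hasDerivWithinAt) t ht

theorem hasDerivAt_partial_fst {f : ℝ × V → W} {t : ℝ} {z : V}
    (hf : DifferentiableAt ℝ f (t, z)) :
    HasDerivAt (fun s => f (s, z)) (fderiv ℝ f (t, z) (1, 0)) t :=
  hf.hasFDerivAt.comp_hasDerivAt t ((hasDerivAt_id t).prodMk (hasDerivAt_const t z))

theorem hasFDerivAt_partial_snd {f : ℝ × V → W} {t : ℝ} {z : V}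
    (hf : DifferentiableAt ℝ f (t, z)) :
    HasFDerivAt (fun y => f (t, y)) (fderiv ℝ f (t, z) ∘L inr ℝ ℝ V) z :=
  hf.hasFDerivAt.comp z (hasFDerivAt_prodMk_right t z)

end Calculus

section Flow

variable {V W : Type*} [NormedAddCommGroup V] [NormedSpace ℝ V]
  [NormedAddCommGroup W] [NormedSpace ℝ W]
  {X : ℝ → V → V} {Φ : ℝ × V → V} {f : ℝ × V → W} {T t : ℝ}

/-- `Φ` is the flow, over the time interval `[0, T]`, of the time-dependent vector field `X`. The
time derivative is the value of `fderiv ℝ Φ` at `(1, 0)`, which has this meaning when `Φ` is jointly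
differentiable. -/
structure IsFlowOf (X : ℝ → V → V) (Φ : ℝ × V → V) (T : ℝ) : Prop where
  initial : ∀ z, Φ (0, z) = z
  velocity : ∀ t ∈ Icc 0 T, ∀ z, fderiv ℝ Φ (t, z) (1, 0) = X t (Φ (t, z))

/-- `f` solves the transport (Liouville) equation `∂_t f + D_z f · X = 0` over the time interval
`[0, T]`. The left-hand side is encoded as the derivative of `f` in the space-time direction
`(1, X)`. -/
def SolvesTransport (X : ℝ → V → V) (f : ℝ × V → W) (T : ℝ) : Prop :=
  ∀ t ∈ Icc 0 T, ∀ z, fderiv ℝ f (t, z) (1, X t z) = 0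

namespace IsFlowOf

theorem fderiv_initial (hflow : IsFlowOf X Φ T) (hΦ : Differentiable ℝ Φ) (z u : V) :
    fderiv ℝ Φ (0, z) (0, u) = u := by
  have hslice := hasFDerivAt_partial_snd (hΦ (0, z))
  simp only [hflow.initial] at hslice
  simpa using DFunLike.congr_fun (hslice.unique (hasFDerivAt_id z)) u

theorem apply_eq_initial_of_solvesTransport (hflow : IsFlowOf X Φ T) (hΦ : Differentiable ℝ Φ)
    (hf : Differentiable ℝ f) (hX : SolvesTransport X f T) (ht : t ∈ Icc 0 T) (z : V) :
    f (t, Φ (t, z)) = f (0, z) := by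
  have hderiv : ∀ s ∈ Icc 0 T, HasDerivAt (fun s => f (s, Φ (s, z))) 0 s := fun s hs => by
    have hcurve := (hasDerivAt_id s).prodMk (hasDerivAt_partial_fst (hΦ (s, z)))
    have hcomp := (hf (s, Φ (s, z))).hasFDerivAt.comp_hasDerivAt s hcurve
    rwa [hflow.velocity s hs, hX s hs] at hcomp
  simpa only [hflow.initial] using eq_initial_of_hasDerivAt_zero hderiv ht

theorem fderiv_apply_fderiv_of_solvesTransport (hflow : IsFlowOf X Φ T) (hΦ : Differentiable ℝ Φ)
    (hf : Differentiable ℝ f) (hX : SolvesTransport X f T) (ht : t ∈ Icc 0 T) (z u : V) :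
    fderiv ℝ f (t, Φ (t, z)) (0, fderiv ℝ Φ (t, z) (0, u)) = fderiv ℝ f (0, z) (0, u) := by
  have hgraph := (hasFDerivAt_const t z).prodMk (hasFDerivAt_partial_snd (hΦ (t, z)))
  have hcomp : HasFDerivAt (fun y => f (t, Φ (t, y))) _ z :=
    (hf (t, Φ (t, z))).hasFDerivAt.comp z hgraph
  simp only [hflow.apply_eq_initial_of_solvesTransport hΦ hf hX ht] at hcomp
  simpa using DFunLike.congr_fun (hcomp.unique (hasFDerivAt_partial_snd (hf (0, z)))) u

/-- The first variation equation of the flow. -/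
theorem hasDerivAt_fderiv (hflow : IsFlowOf X Φ T) (hΦ : ContDiff ℝ 2 Φ)
    (ht : t ∈ Icc 0 T) (hX : Differentiable ℝ (X t)) (z u : V) :
    HasDerivAt (fun s => fderiv ℝ Φ (s, z) (0, u))
      (fderiv ℝ (X t) (Φ (t, z)) (fderiv ℝ Φ (t, z) (0, u))) t := by
  have hΦ₁ : Differentiable ℝ Φ := hΦ.differentiable two_ne_zero
  have hΦ₂ : Differentiable ℝ (fderiv ℝ Φ) :=
    (hΦ.fderiv_right (m := 1) (by norm_num)).differentiable one_ne_zero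
  have hmixed : fderiv ℝ (fderiv ℝ Φ) (t, z) (0, u) (1, 0)
      = fderiv ℝ (X t) (Φ (t, z)) (fderiv ℝ Φ (t, z) (0, u)) := by
    have hleft := (hasFDerivAt_partial_snd (hΦ₂ (t, z))).clm_apply
      (hasFDerivAt_const ((1 : ℝ), (0 : V)) z)
    have hright : HasFDerivAt (fun y => X t (Φ (t, y))) _ z :=
      (hX (Φ (t, z))).hasFDerivAt.comp z (hasFDerivAt_partial_snd (hΦ₁ (t, z)))
    simp only [hflow.velocity t ht] at hleft
    simpa using DFunLike.congr_fun (hleft.unique hright) u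
  have hsymm : IsSymmSndFDerivAt ℝ Φ (t, z) := hΦ.contDiffAt.isSymmSndFDerivAt (by simp)
  rw [← hmixed, hsymm.eq]
  simpa using (hasDerivAt_partial_fst (hΦ₂ (t, z))).clm_apply (hasDerivAt_const t ((0 : ℝ), u))

theorem bilinear_fderiv_eq (hflow : IsFlowOf X Φ T) (hΦ : ContDiff ℝ 2 Φ)
    (hX : ∀ s ∈ Icc 0 T, Differentiable ℝ (X s)) {ω : V →L[ℝ] V →L[ℝ] W}
    (hω : ∀ s ∈ Icc 0 T, ∀ x u v,
      ω (fderiv ℝ (X s) x u) v + ω u (fderiv ℝ (X s) x v) = 0)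
    (ht : t ∈ Icc 0 T) (z u v : V) :
    ω (fderiv ℝ Φ (t, z) (0, u)) (fderiv ℝ Φ (t, z) (0, v)) = ω u v := by
  have hderiv : ∀ s ∈ Icc 0 T,
      HasDerivAt (fun s => ω (fderiv ℝ Φ (s, z) (0, u)) (fderiv ℝ Φ (s, z) (0, v))) 0 s := by
    intro s hs
    have hu := hflow.hasDerivAt_fderiv hΦ hs (hX s hs) z u
    have hv := hflow.hasDerivAt_fderiv hΦ hs (hX s hs) z v
    exact ((ω.hasFDerivAt.comp_hasDerivAt s hu).clm_apply hv).congr_deriv (hω s hs _ _ _)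
  simpa only [hflow.fderiv_initial (hΦ.differentiable two_ne_zero)] using
    eq_initial_of_hasDerivAt_zero hderiv ht

end IsFlowOf

end Flow

section Symplectic

theorem surjective_of_preserves_separatingLeft {K V M : Type*} [Field K] [AddCommGroup V]
    [Module K V] [FiniteDimensional K V] [AddCommGroup M] [Module K M] {ω : V →ₗ[K] V →ₗ[K] M}
    (hω : ω.SeparatingLeft) {A : V →ₗ[K] V} (hA : ∀ u v, ω (A u) (A v) = ω u v) :
    Function.Surjective A := by
  refine LinearMap.surjective_of_injective ((injective_iff_map_eq_zero A).2 fun u hu => hω u ?_)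
  intro v
  rw [← hA, hu, map_zero, LinearMap.zero_apply]

variable {V W : Type*} [NormedAddCommGroup V] [NormedSpace ℝ V]
  [NormedAddCommGroup W] [NormedSpace ℝ W]

/-- `X` is a Hamiltonian vector field of the function `H` for the bilinear form `ω`, in the sense
that `ω(X, ·) = dH`. -/
def IsHamiltonianField (ω : V →L[ℝ] V →L[ℝ] ℝ) (H : V → ℝ) (X : V → V) : Prop :=
  ∀ x v, ω (X x) v = fderiv ℝ H x v

theorem IsHamiltonianField.bilinear_fderiv_add_eq_zero {ω : V →L[ℝ] V →L[ℝ] ℝ} {H : V → ℝ}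
    {X : V → V} (hX : IsHamiltonianField ω H X) (hω : ∀ u v, ω u v = -ω v u)
    (hH : Differentiable ℝ H) (hXd : Differentiable ℝ X) (x u v : V) :
    ω (fderiv ℝ X x u) v + ω u (fderiv ℝ X x v) = 0 := by
  have hhessian : HasFDerivAt (fderiv ℝ H) (ω ∘L fderiv ℝ X x) x := by
    rw [← show (fun y => ω (X y)) = fderiv ℝ H from funext fun y => ext (hX y)]
    exact ω.hasFDerivAt.comp x (hXd x).hasFDerivAt
  have hsymm : ω (fderiv ℝ X x u) v = ω (fderiv ℝ X x v) u :=
    second_derivative_symmetric (fun y => (hH y).hasFDerivAt) hhessian u v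
  rw [hω u, hsymm, add_neg_cancel]

variable [FiniteDimensional ℝ V] {ω : V →L[ℝ] V →L[ℝ] ℝ} {H : ℝ → V → ℝ}
  {X : ℝ → V → V} {Φ : ℝ × V → V} {f : ℝ × V → W} {T t : ℝ}

theorem IsFlowOf.fderiv_eq_sum_of_linear_initial (hflow : IsFlowOf X Φ T) (hΦ : ContDiff ℝ 2 Φ)
    (hanti : ∀ u v, ω u v = -ω v u) (hsep : ω.toLinearMap₁₂.SeparatingLeft)
    (hH : ∀ t ∈ Icc 0 T, Differentiable ℝ (H t))
    (hXd : ∀ t ∈ Icc 0 T, Differentiable ℝ (X t))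
    (hX : ∀ t ∈ Icc 0 T, IsHamiltonianField ω (H t) (X t))
    (hf : Differentiable ℝ f) (htr : SolvesTransport X f T)
    {κ : Type*} [Fintype κ] {a : κ → V} {c : κ → W} (hf0 : ∀ z, f (0, z) = ∑ i, ω (a i) z • c i)
    (ht : t ∈ Icc 0 T) (z w : V) :
    fderiv ℝ f (t, Φ (t, z)) (0, w) = ∑ i, ω (fderiv ℝ Φ (t, z) (0, a i)) w • c i := by
  have hsymp := hflow.bilinear_fderiv_eq hΦ hXd
    (fun s hs => (hX s hs).bilinear_fderiv_add_eq_zero hanti (hH s hs) (hXd s hs)) ht z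
  obtain ⟨u, rfl⟩ : ∃ u, fderiv ℝ Φ (t, z) (0, u) = w :=
    surjective_of_preserves_separatingLeft
      (A := (fderiv ℝ Φ (t, z) ∘L inr ℝ ℝ V).toLinearMap) hsep hsymp w
  have hinit : fderiv ℝ f (0, z) (0, u) = ∑ i, ω (a i) u • c i := by
    have hslice := hasFDerivAt_partial_snd (hf (0, z))
    simp only [hf0] at hslice
    have hlin : HasFDerivAt (fun y => ∑ i, ω (a i) y • c i) (∑ i, (ω (a i)).smulRight (c i)) z :=
      HasFDerivAt.fun_sum fun i _ => ((ω (a i)).smulRight (c i)).hasFDerivAt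
    simpa [sum_apply] using DFunLike.congr_fun (hslice.unique hlin) u
  rw [hflow.fderiv_apply_fderiv_of_solvesTransport (hΦ.differentiable two_ne_zero) hf htr ht, hinit]
  simp only [hsymp]

end Symplectic

section Coordinates

variable {ι : Type*} [Fintype ι]

/-- The phase space with position coordinates `x.1` and momentum coordinates `x.2`. -/
abbrev PhaseSpace (ι : Type*) := (ι → ℝ) × (ι → ℝ)

/-- The canonical symplectic form `∑ j, dq_j ∧ dp_j` on phase space. -/
def canonicalForm (ι : Type*) [Fintype ι] : PhaseSpace ι →L[ℝ] PhaseSpace ι →L[ℝ] ℝ :=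
  let q (j : ι) : PhaseSpace ι →L[ℝ] ℝ := proj j ∘L fst ℝ _ _
  let p (j : ι) : PhaseSpace ι →L[ℝ] ℝ := proj j ∘L snd ℝ _ _
  ∑ j, ((q j).smulRight (p j) - (p j).smulRight (q j))

theorem canonicalForm_apply (u v : PhaseSpace ι) :
    canonicalForm ι u v = ∑ j, (u.1 j * v.2 j - u.2 j * v.1 j) := by
  simp [canonicalForm, sum_apply, Finset.sum_sub_distrib]

theorem canonicalForm_antisymm (u v : PhaseSpace ι) :
    canonicalForm ι u v = -canonicalForm ι v u := by
  simp only [canonicalForm_apply, ← Finset.sum_neg_distrib]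
  exact Finset.sum_congr rfl fun j _ => by ring

@[simp]
theorem canonicalForm_apply_position [DecidableEq ι] (u : PhaseSpace ι) (j : ι) :
    canonicalForm ι u (Pi.single j 1, 0) = -u.2 j := by
  simp [canonicalForm_apply, Pi.single_apply]

@[simp]
theorem canonicalForm_apply_momentum [DecidableEq ι] (u : PhaseSpace ι) (j : ι) :
    canonicalForm ι u (0, Pi.single j 1) = u.1 j := by
  simp [canonicalForm_apply, Pi.single_apply]

theorem canonicalForm_separatingLeft : (canonicalForm ι).toLinearMap₁₂.SeparatingLeft := by
  classical
  intro u hu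
  ext j
  · simpa using hu (0, Pi.single j 1)
  · simpa using hu (Pi.single j 1, 0)

variable [DecidableEq ι]

theorem map_eq_sum_phaseSpace {M : Type*} [AddCommGroup M] [Module ℝ M]
    (L : PhaseSpace ι →ₗ[ℝ] M) (v : PhaseSpace ι) :
    L v = ∑ j, v.1 j • L (Pi.single j 1, 0) + ∑ j, v.2 j • L (0, Pi.single j 1) := by
  have hv : v = ∑ j, v.1 j • ((Pi.single j 1, 0) : PhaseSpace ι)
      + ∑ j, v.2 j • ((0, Pi.single j 1) : PhaseSpace ι) := by
    ext i <;> simp [Prod.fst_sum, Prod.snd_sum, Finset.sum_apply, Pi.single_apply]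
  conv_lhs => rw [hv]
  simp only [map_sum, map_add, map_smul]

/-- The right-hand side `(∂_p H, -∂_q H)` of Hamilton's equations. -/
def hamiltonianField (H : PhaseSpace ι → ℝ) (x : PhaseSpace ι) : PhaseSpace ι :=
  (fun j => fderiv ℝ H x (0, Pi.single j 1), fun j => -fderiv ℝ H x (Pi.single j 1, 0))

theorem isHamiltonianField_hamiltonianField (H : PhaseSpace ι → ℝ) :
    IsHamiltonianField (canonicalForm ι) H (hamiltonianField H) := by
  intro x v
  rw [canonicalForm_apply, ← coe_coe (fderiv ℝ H x), map_eq_sum_phaseSpace _ v,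
    ← Finset.sum_add_distrib]
  exact Finset.sum_congr rfl fun j _ => by simp [hamiltonianField]; ring

theorem differentiable_hamiltonianField {H : PhaseSpace ι → ℝ} (hH : ContDiff ℝ 2 H) :
    Differentiable ℝ (hamiltonianField H) := by
  have hH₂ : Differentiable ℝ (fderiv ℝ H) :=
    (hH.fderiv_right (m := 1) (by norm_num)).differentiable one_ne_zero
  have hpartial : ∀ v, Differentiable ℝ fun x => fderiv ℝ H x v :=
    fun v => hH₂.clm_apply (differentiable_const v)
  exact (differentiable_pi.2 fun j => hpartial _).prodMk
    (differentiable_pi.2 fun j => (hpartial _).neg)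

theorem map_one_hamiltonianField {W : Type*} [NormedAddCommGroup W] [NormedSpace ℝ W]
    (L : ℝ × PhaseSpace ι →L[ℝ] W) (H : PhaseSpace ι → ℝ) (x : PhaseSpace ι) :
    L (1, hamiltonianField H x) = L (1, 0, 0)
      + ∑ l, fderiv ℝ H x (0, Pi.single l 1) • L (0, Pi.single l 1, 0)
      - ∑ l, fderiv ℝ H x (Pi.single l 1, 0) • L (0, 0, Pi.single l 1) := by
  have hsplit : L (1, hamiltonianField H x) = L (1, 0, 0) + L (0, hamiltonianField H x) := by
    rw [← map_add, Prod.mk_add_mk, add_zero, Prod.mk_zero_zero, zero_add]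
  have hexpand := map_eq_sum_phaseSpace (L ∘L inr ℝ ℝ _).toLinearMap (hamiltonianField H x)
  simp only [coe_coe, comp_apply, inr_apply] at hexpand
  rw [hsplit, hexpand]
  simp only [hamiltonianField, neg_smul, Finset.sum_neg_distrib, sub_eq_add_neg, add_assoc]

end Coordinates

theorem stmt_8_general {ι : Type*} [Fintype ι] [DecidableEq ι] (T : ℝ)
    (H : ℝ → (ι → ℝ) × (ι → ℝ) → ℝ)
    (Q P : ℝ × (ι → ℝ) × (ι → ℝ) → ι → ℝ)
    (φ : ℝ × (ι → ℝ) × (ι → ℝ) → ι → ℂ)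
    (hH : ∀ t ∈ Icc 0 T, ContDiff ℝ 2 (H t))
    (hQ : ContDiff ℝ 2 Q) (hP : ContDiff ℝ 2 P) (hφ : Differentiable ℝ φ)
    (hQt : ∀ t ∈ Icc 0 T, ∀ q p j,
      fderiv ℝ Q (t, q, p) (1, 0, 0) j
        = fderiv ℝ (H t) (Q (t, q, p), P (t, q, p)) (0, Pi.single j 1))
    (hPt : ∀ t ∈ Icc 0 T, ∀ q p j,
      fderiv ℝ P (t, q, p) (1, 0, 0) j
        = -fderiv ℝ (H t) (Q (t, q, p), P (t, q, p)) (Pi.single j 1, 0))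
    (hQ0 : ∀ q p, Q (0, q, p) = q) (hP0 : ∀ q p, P (0, q, p) = p)
    (hLiouville : ∀ t ∈ Icc 0 T, ∀ a b j,
      fderiv ℝ (fun v => φ v j) (t, a, b) (1, 0, 0)
        + ∑ l, (fderiv ℝ (H t) (a, b) (0, Pi.single l 1) : ℂ)
            * fderiv ℝ (fun v => φ v j) (t, a, b) (0, Pi.single l 1, 0)
        - ∑ l, (fderiv ℝ (H t) (a, b) (Pi.single l 1, 0) : ℂ)
            * fderiv ℝ (fun v => φ v j) (t, a, b) (0, 0, Pi.single l 1) = 0)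
    (hφ0 : ∀ a b j, φ (0, a, b) j = (b j : ℂ) + Complex.I * (a j : ℂ))
    (t : ℝ) (ht : t ∈ Icc 0 T) (q p : ι → ℝ) (k j : ι) :
    ((fderiv ℝ Q (t, q, p) (0, Pi.single k 1, 0) j : ℂ)
          - Complex.I * (fderiv ℝ Q (t, q, p) (0, 0, Pi.single k 1) j : ℂ)
        = fderiv ℝ (fun v => φ v k) (t, Q (t, q, p), P (t, q, p)) (0, 0, Pi.single j 1))
      ∧ ((fderiv ℝ P (t, q, p) (0, Pi.single k 1, 0) j : ℂ)
          - Complex.I * (fderiv ℝ P (t, q, p) (0, 0, Pi.single k 1) j : ℂ)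
        = -fderiv ℝ (fun v => φ v k) (t, Q (t, q, p), P (t, q, p)) (0, Pi.single j 1, 0)) := by
  have hfderiv : ∀ x v, fderiv ℝ (fun x => (Q x, P x)) x v = (fderiv ℝ Q x v, fderiv ℝ P x v) :=
    fun x v => by
      rw [(hQ.differentiable two_ne_zero x).fderiv_prodMk (hP.differentiable two_ne_zero x)]
      rfl
  have hflow : IsFlowOf (fun t => hamiltonianField (H t)) (fun x => (Q x, P x)) T :=
    { initial := fun z => Prod.ext (hQ0 z.1 z.2) (hP0 z.1 z.2)
      velocity := fun t ht z => (hfderiv _ _).trans <|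
        Prod.ext (funext (hQt t ht z.1 z.2)) (funext (hPt t ht z.1 z.2)) }
  have htransport : SolvesTransport (fun t => hamiltonianField (H t)) (fun v => φ v k) T :=
    fun t ht z => by
      simpa only [map_one_hamiltonianField, Complex.real_smul] using hLiouville t ht z.1 z.2 k
  have hφk : ∀ w, fderiv ℝ (fun v => φ v k) (t, Q (t, q, p), P (t, q, p)) (0, w)
      = canonicalForm ι (fderiv ℝ (fun x => (Q x, P x)) (t, q, p) (0, Pi.single k 1, 0)) w
        - Complex.I
          * canonicalForm ι (fderiv ℝ (fun x => (Q x, P x)) (t, q, p) (0, 0, Pi.single k 1)) w := by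
    have hinitial : ∀ z, φ (0, z) k = ∑ i, canonicalForm ι
        (![(Pi.single k 1, 0), (0, Pi.single k 1)] i) z • ![1, -Complex.I] i := fun z => by
      simp [hφ0 z.1 z.2, canonicalForm_antisymm _ z, mul_comm, add_comm]
    intro w
    simpa [← sub_eq_add_neg, mul_comm] using
      hflow.fderiv_eq_sum_of_linear_initial (hQ.prodMk hP) canonicalForm_antisymm
        canonicalForm_separatingLeft (fun s hs => (hH s hs).differentiable two_ne_zero)
        (fun s hs => differentiable_hamiltonianField (hH s hs))
        (fun s _ => isHamiltonianField_hamiltonianField (H s))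
        (differentiable_pi.1 hφ k) htransport hinitial ht (q, p) w
  simp [hφk, hfderiv, sub_eq_add_neg, add_comm]

/-- Theorem 4.1 of the paper: if `φ` solves the Liouville equation with initial
datum `φ_j(0,Q,P) = P_j + iQ_j`, then along the Hamiltonian flow
`∂_{z_k}Q_j = (∂_{P_j}φ_k)(t,Q,P)` and `∂_{z_k}P_j = −(∂_{Q_j}φ_k)(t,Q,P)`,
where `∂_{z_k} = ∂_{q_k} − i∂_{p_k}` acts on the Lagrangian parameters. -/
theorem stmt_8 (d : ℕ) (T : ℝ) (hT : 0 < T)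
    (H : (Fin d → ℝ) × (Fin d → ℝ) → ℝ)
    (Q P : ℝ × (Fin d → ℝ) × (Fin d → ℝ) → Fin d → ℝ)
    (φ : ℝ × (Fin d → ℝ) × (Fin d → ℝ) → Fin d → ℂ)
    (hH : ContDiff ℝ (⊤ : ℕ∞) H)
    (hQ : ContDiff ℝ (⊤ : ℕ∞) Q) (hP : ContDiff ℝ (⊤ : ℕ∞) P) (hφ : ContDiff ℝ (⊤ : ℕ∞) φ)
    (hQt : ∀ t ∈ Set.Icc (0:ℝ) T, ∀ q p : Fin d → ℝ, ∀ j : Fin d,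
      fderiv ℝ Q (t, q, p) (1, 0, 0) j
        = fderiv ℝ H (Q (t, q, p), P (t, q, p)) (0, Pi.single j 1))
    (hPt : ∀ t ∈ Set.Icc (0:ℝ) T, ∀ q p : Fin d → ℝ, ∀ j : Fin d,
      fderiv ℝ P (t, q, p) (1, 0, 0) j
        = - fderiv ℝ H (Q (t, q, p), P (t, q, p)) (Pi.single j 1, 0))
    (hQ0 : ∀ q p : Fin d → ℝ, Q (0, q, p) = q)
    (hP0 : ∀ q p : Fin d → ℝ, P (0, q, p) = p)
    (hLiouville : ∀ t ∈ Set.Icc (0:ℝ) T, ∀ a b : Fin d → ℝ, ∀ j : Fin d,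
      fderiv ℝ (fun v => φ v j) (t, a, b) (1, 0, 0)
        + ∑ l, ((fderiv ℝ H (a, b) (0, Pi.single l 1) : ℝ) : ℂ)
            * fderiv ℝ (fun v => φ v j) (t, a, b) (0, Pi.single l 1, 0)
        - ∑ l, ((fderiv ℝ H (a, b) (Pi.single l 1, 0) : ℝ) : ℂ)
            * fderiv ℝ (fun v => φ v j) (t, a, b) (0, 0, Pi.single l 1) = 0)
    (hφ0 : ∀ a b : Fin d → ℝ, ∀ j : Fin d,
      φ (0, a, b) j = ((b j : ℝ) : ℂ) + Complex.I * ((a j : ℝ) : ℂ)) :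
    ∀ t ∈ Set.Icc (0:ℝ) T, ∀ q p : Fin d → ℝ, ∀ k j : Fin d,
      (((fderiv ℝ Q (t, q, p) (0, Pi.single k 1, 0) j : ℝ) : ℂ)
          - Complex.I * ((fderiv ℝ Q (t, q, p) (0, 0, Pi.single k 1) j : ℝ) : ℂ)
        = fderiv ℝ (fun v => φ v k) (t, Q (t, q, p), P (t, q, p)) (0, 0, Pi.single j 1))
      ∧ (((fderiv ℝ P (t, q, p) (0, Pi.single k 1, 0) j : ℝ) : ℂ)
          - Complex.I * ((fderiv ℝ P (t, q, p) (0, 0, Pi.single k 1) j : ℝ) : ℂ)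
        = - fderiv ℝ (fun v => φ v k) (t, Q (t, q, p), P (t, q, p)) (0, Pi.single j 1, 0)) := by
  exact stmt_8_general T (fun _ => H) Q P φ (fun _ _ => contDiff_infty.1 hH 2)
    (contDiff_infty.1 hQ 2) (contDiff_infty.1 hP 2) (hφ.differentiable (by simp))
    hQt hPt hQ0 hP0 hLiouville hφ0
end
end

section
/- Let A_1, …, A_d : ℝ^d → ℝ^{M×M} be smooth matrix-valued functions, and let U ⊆ ℝ^d × ℝ^d be open. Suppose H : U → ℝ and R, L : U → ℝ^M are smooth and satisfy, for all (q,p) ∈ U: Σ_{l=1}^d p_l A_l(q) R(q,p) = H(q,p) R(q,p), Σ_{l=1}^d p_l L(q,p)ᵀ A_l(q) = H(q,p) L(q,p)ᵀ, and L(q,p)ᵀ R(q,p) = 1. Define for each j = 1,…,d the ℂ^M-valued function F_j(q,p) = −( (A_j(q) − ∂_{p_j} H(q,p) I_M) + i ( ∂_{q_j} H(q,p) I_M − Σ_{l=1}^d p_l (∂_{q_j} A_l)(q) ) ) R(q,p). Then L(q,p)ᵀ F_j(q,p) = 0 for every j and all (q,p) ∈ U. -/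
/-!
Pair the eigenvalue equation `T x (r x) = μ x • r x` with the left eigenvector `ℓ` frozen at a base
point `w`, where `ℓ (r w) = 1`:
`(μ x - μ w) * ℓ (r x) = ℓ ((T x - T w) (r x))`.
The operator on the right vanishes at `w`, so its pairing with `r x` can be differentiated there
knowing only that `r` is continuous, and the Hellmann–Feynman formula `μ' v = ℓ (T' v (r w))`
follows. For `T = Σ_l p_l A_l(q)`, the direction `p_j` gives `∂_{p_j} H = Lᵀ A_j R` and `q_j` gives
`∂_{q_j} H = Lᵀ (Σ_l p_l ∂_{q_j} A_l) R`: these are the real and imaginary parts of `Lᵀ F_j = 0`.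
-/

open Matrix

noncomputable section

open Filter Topology Asymptotics

section HellmannFeynman

variable {𝕜 E F G : Type*} [NontriviallyNormedField 𝕜]
  [NormedAddCommGroup E] [NormedSpace 𝕜 E] [NormedAddCommGroup F] [NormedSpace 𝕜 F]
  [NormedAddCommGroup G] [NormedSpace 𝕜 G] {w : E}

theorem hasFDerivAt_clm_apply_of_eq_zero {φ : E → F →L[𝕜] G} {φ' : E →L[𝕜] F →L[𝕜] G} {r : E → F}
    (hφ : HasFDerivAt φ φ' w) (hφw : φ w = 0) (hr : ContinuousAt r w) :
    HasFDerivAt (fun x => φ x (r x)) (φ'.flip (r w)) w := by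
  have hremainder : (fun x => (φ x - φ w - φ' (x - w)) (r x)) =o[𝓝 w] (· - w) := by
    have hbound : (fun x => (φ x - φ w - φ' (x - w)) (r x)) =O[𝓝 w]
        fun x => ‖φ x - φ w - φ' (x - w)‖ * ‖r x‖ :=
      .of_norm_le fun x => by simpa using (φ x - φ w - φ' (x - w)).le_opNorm (r x)
    simpa using hbound.trans_isLittleO (hφ.isLittleO.norm_norm.mul_isBigO
      (hr.norm.isBigO_one ℝ)) |>.norm_right
  have hincrement : (fun x => φ' (x - w) (r x - r w)) =o[𝓝 w] (· - w) := by
    have hbound : (fun x => φ' (x - w) (r x - r w)) =O[𝓝 w]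
        fun x => ‖φ' (x - w)‖ * ‖r x - r w‖ :=
      .of_norm_le fun x => by simpa using (φ' (x - w)).le_opNorm (r x - r w)
    have hsmall : (fun x => ‖r x - r w‖) =o[𝓝 w] fun _ => (1 : ℝ) :=
      (isLittleO_one_iff ℝ).2 (tendsto_iff_norm_sub_tendsto_zero.1 hr)
    simpa using hbound.trans_isLittleO ((φ'.isBigO_sub (𝓝 w) w).norm_norm.mul_isLittleO hsmall)
      |>.norm_right
  refine .of_isLittleO ((hremainder.add hincrement).congr_left fun x => ?_)
  simp only [hφw, ContinuousLinearMap.flip_apply, _root_.sub_apply, map_sub, _root_.zero_apply]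
  abel

theorem hasFDerivAt_eigenvalue {T : E → F →L[𝕜] F} {T' : E →L[𝕜] F →L[𝕜] F} {μ : E → 𝕜} {r : E → F}
    {ℓ : F →L[𝕜] 𝕜} (hT : HasFDerivAt T T' w) (hr : ContinuousAt r w)
    (hright : ∀ᶠ x in 𝓝 w, T x (r x) = μ x • r x) (hleft : ℓ ∘L T w = μ w • ℓ)
    (hnorm : ℓ (r w) = 1) :
    HasFDerivAt μ (ℓ ∘L T'.flip (r w)) w := by
  have hℓr : ContinuousAt (fun x => ℓ (r x)) w := ℓ.continuous.continuousAt.comp hr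
  have hne : ∀ᶠ x in 𝓝 w, ℓ (r x) ≠ 0 := hℓr.eventually_ne (by simp [hnorm])
  -- Rescaling keeps `r` an eigenvector and makes `ℓ (r x) = 1` near `w`.
  have hrescaled : ContinuousAt (fun x => (ℓ (r x))⁻¹ • r x) w :=
    (hℓr.inv₀ (by simp [hnorm])).smul hr
  have hincrement : HasFDerivAt (fun x => (T x - T w) ((ℓ (r x))⁻¹ • r x)) (T'.flip (r w)) w := by
    simpa [hnorm] using
      hasFDerivAt_clm_apply_of_eq_zero (hT.sub_const (T w)) (sub_self _) hrescaled
  refine ((ℓ.hasFDerivAt.comp w hincrement).const_add (μ w)).congr_of_eventuallyEq ?_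
  filter_upwards [hright, hne] with x hx hx0
  have hTw : ℓ (T w (r x)) = μ w * ℓ (r x) := DFunLike.congr_fun hleft (r x)
  simp only [Function.comp_apply, _root_.sub_apply, map_smul, map_sub, hx, hTw, smul_eq_mul]
  field_simp
  ring

end HellmannFeynman

section Symbol

variable {𝕜 E ι n : Type*} [Semiring 𝕜] [Fintype ι]

/-- The symbol `Σ_l p_l A_l(q)` at the phase-space point `w = (q, p)`. -/
def symbol (A : ι → E → Matrix n n 𝕜) (w : E × (ι → 𝕜)) : Matrix n n 𝕜 :=
  ∑ l, w.2 l • A l w.1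

theorem symbol_zero (A : ι → E → Matrix n n 𝕜) (q : E) : symbol A (q, 0) = 0 := by
  simp [symbol]

theorem symbol_single [DecidableEq ι] (A : ι → E → Matrix n n 𝕜) (q : E) (j : ι) :
    symbol A (q, Pi.single j 1) = A j q := by
  simp [symbol, Pi.single_apply]

end Symbol

section Matrix

variable {𝕜 E ι n : Type*} [NontriviallyNormedField 𝕜] [NormedAddCommGroup E] [NormedSpace 𝕜 E]

open scoped Matrix.Norms.Elementwise in
theorem hasFDerivAt_matrix_eigenvalue [CompleteSpace 𝕜] [Fintype n] {N : E → Matrix n n 𝕜}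
    {N' : n → n → E →L[𝕜] 𝕜} {μ : E → 𝕜} {r : E → n → 𝕜} {ℓ : n → 𝕜} {w : E}
    (hN : ∀ i k, HasFDerivAt (fun x => N x i k) (N' i k) w) (hr : ContinuousAt r w)
    (hright : ∀ᶠ x in 𝓝 w, N x *ᵥ r x = μ x • r x) (hleft : ℓ ᵥ* N w = μ w • ℓ)
    (hnorm : ℓ ⬝ᵥ r w = 1) :
    HasFDerivAt μ (∑ i, ∑ k, (ℓ i * r w k) • N' i k) w := by
  let mulVecCLM : Matrix n n 𝕜 →L[𝕜] (n → 𝕜) →L[𝕜] (n → 𝕜) := LinearMap.toContinuousLinearMap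
    (LinearMap.toContinuousLinearMap.toLinearMap ∘ₗ mulVecBilin 𝕜 𝕜)
  let pairing : (n → 𝕜) →L[𝕜] 𝕜 := LinearMap.toContinuousLinearMap (dotProductBilin 𝕜 𝕜 ℓ)
  have hN' : HasFDerivAt N (.pi fun i => .pi fun k => N' i k) w :=
    hasFDerivAt_pi.2 fun i => hasFDerivAt_pi.2 (hN i)
  have hpairing : pairing ∘L mulVecCLM (N w) = μ w • pairing := by
    ext1 y
    change ℓ ⬝ᵥ (N w *ᵥ y) = μ w * (ℓ ⬝ᵥ y)
    rw [dotProduct_mulVec, hleft, smul_dotProduct, smul_eq_mul]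
  convert hasFDerivAt_eigenvalue (mulVecCLM.hasFDerivAt.comp w hN') hr hright hpairing hnorm
    using 1
  ext v
  change _ = ∑ i, ℓ i * ∑ k, N' i k v * r w k
  simp [Finset.mul_sum, mul_assoc, mul_comm (r w _)]

/-- The directional derivative at `w` along `v` of a matrix-valued function, taken entry by entry
so that no norm on matrices has to be chosen. -/
def entrywiseFDeriv (N : E → Matrix n n 𝕜) (w v : E) : Matrix n n 𝕜 :=
  .of fun i k => fderiv 𝕜 (fun x => N x i k) w v

theorem entrywiseFDeriv_zero (N : E → Matrix n n 𝕜) (w : E) : entrywiseFDeriv N w 0 = 0 := by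
  ext
  simp [entrywiseFDeriv]

theorem fderiv_matrix_eigenvalue [CompleteSpace 𝕜] [Fintype n] {N : E → Matrix n n 𝕜}
    {μ : E → 𝕜} {r : E → n → 𝕜} {ℓ : n → 𝕜} {w : E}
    (hN : ∀ i k, DifferentiableAt 𝕜 (fun x => N x i k) w) (hr : ContinuousAt r w)
    (hright : ∀ᶠ x in 𝓝 w, N x *ᵥ r x = μ x • r x) (hleft : ℓ ᵥ* N w = μ w • ℓ)
    (hnorm : ℓ ⬝ᵥ r w = 1) (v : E) :
    fderiv 𝕜 μ w v = ℓ ⬝ᵥ (entrywiseFDeriv N w v *ᵥ r w) := by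
  rw [(hasFDerivAt_matrix_eigenvalue (hN · · |>.hasFDerivAt) hr hright hleft hnorm).fderiv]
  simp [dotProduct, mulVec, entrywiseFDeriv, Finset.mul_sum, mul_assoc, mul_comm (r w _)]

variable [Fintype ι] {A : ι → E → Matrix n n 𝕜} {w : E × (ι → 𝕜)}

theorem hasFDerivAt_symbol_apply {i k : n}
    (hA : ∀ l, DifferentiableAt 𝕜 (fun q => A l q i k) w.1) :
    HasFDerivAt (fun x => symbol A x i k)
      (∑ l, (w.2 l • fderiv 𝕜 (fun q => A l q i k) w.1 ∘L .fst 𝕜 E (ι → 𝕜) +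
        A l w.1 i k • .proj l ∘L .snd 𝕜 E (ι → 𝕜))) w := by
  have hp (l : ι) : HasFDerivAt (fun x : E × (ι → 𝕜) => x.2 l)
      (.proj l ∘L .snd 𝕜 E (ι → 𝕜)) w :=
    hasFDerivAt_pi'.1 hasFDerivAt_snd l
  simp only [symbol, Matrix.sum_apply, Matrix.smul_apply, smul_eq_mul]
  exact .fun_sum fun l _ => (hp l).mul ((hA l).hasFDerivAt.comp w hasFDerivAt_fst)

theorem entrywiseFDeriv_symbol (hA : ∀ l i k, DifferentiableAt 𝕜 (fun q => A l q i k) w.1)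
    (v : E × (ι → 𝕜)) :
    entrywiseFDeriv (symbol A) w v =
      symbol A (w.1, v.2) + ∑ l, w.2 l • entrywiseFDeriv (A l) w.1 v.1 := by
  ext i k
  rw [entrywiseFDeriv, Matrix.of_apply, (hasFDerivAt_symbol_apply (hA · i k)).fderiv]
  simp [entrywiseFDeriv, symbol, Matrix.sum_apply, Finset.sum_add_distrib, add_comm, mul_comm]

theorem entrywiseFDeriv_symbol_momentum [DecidableEq ι]
    (hA : ∀ l i k, DifferentiableAt 𝕜 (fun q => A l q i k) w.1) (j : ι) :
    entrywiseFDeriv (symbol A) w (0, Pi.single j 1) = A j w.1 := by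
  simp [entrywiseFDeriv_symbol hA, symbol_single, entrywiseFDeriv_zero]

theorem entrywiseFDeriv_symbol_position
    (hA : ∀ l i k, DifferentiableAt 𝕜 (fun q => A l q i k) w.1) (u : E) :
    entrywiseFDeriv (symbol A) w (u, 0) = ∑ l, w.2 l • entrywiseFDeriv (A l) w.1 u := by
  simp [entrywiseFDeriv_symbol hA, symbol_zero]

end Matrix

theorem sum_ofReal_mul_neg_add_I_mul {n : Type*} [Fintype n] (ℓ u v : n → ℝ) :
    ∑ i, (ℓ i : ℂ) * -((u i : ℂ) + Complex.I * (v i : ℂ)) =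
      -(((ℓ ⬝ᵥ u : ℝ) : ℂ) + Complex.I * ((ℓ ⬝ᵥ v : ℝ) : ℂ)) := by
  simp only [dotProduct, Complex.ofReal_sum, Complex.ofReal_mul, Finset.mul_sum,
    ← Finset.sum_add_distrib, ← Finset.sum_neg_distrib]
  exact Finset.sum_congr rfl fun i _ => by ring

theorem stmt_12_general {ι n : Type*} [Fintype ι] [DecidableEq ι] [Fintype n]
    {A : ι → (ι → ℝ) → Matrix n n ℝ} {H : (ι → ℝ) × (ι → ℝ) → ℝ}
    {R : (ι → ℝ) × (ι → ℝ) → n → ℝ} {L : n → ℝ} {w : (ι → ℝ) × (ι → ℝ)}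
    (hA : ∀ l i k, DifferentiableAt ℝ (fun q => A l q i k) w.1) (hR : ContinuousAt R w)
    (hright : ∀ᶠ x in 𝓝 w, symbol A x *ᵥ R x = H x • R x) (hleft : L ᵥ* symbol A w = H w • L)
    (hnorm : L ⬝ᵥ R w = 1) :
    DifferentiableAt ℝ H w ∧ ∀ j : ι,
      ∑ i, (L i : ℂ) *
        (-((((A j w.1 *ᵥ R w) i : ℝ) : ℂ)
            - ((fderiv ℝ H w (0, Pi.single j 1) : ℝ) : ℂ) * (R w i : ℂ)
          + Complex.I * (((fderiv ℝ H w (Pi.single j 1, 0) : ℝ) : ℂ) * (R w i : ℂ)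
            - ∑ l, (w.2 l : ℂ) *
              (((entrywiseFDeriv (A l) w.1 (Pi.single j 1) *ᵥ R w) i : ℝ) : ℂ)))) = 0 := by
  have hsymbol (i k : n) : DifferentiableAt ℝ (fun x => symbol A x i k) w :=
    (hasFDerivAt_symbol_apply (hA · i k)).differentiableAt
  have hfderiv := fderiv_matrix_eigenvalue hsymbol hR hright hleft hnorm
  refine ⟨(hasFDerivAt_matrix_eigenvalue (hsymbol · · |>.hasFDerivAt)
    hR hright hleft hnorm).differentiableAt, fun j => ?_⟩
  have hmomentum :
      L ⬝ᵥ (A j w.1 *ᵥ R w - fderiv ℝ H w (0, Pi.single j 1) • R w) = 0 := by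
    simp [hfderiv, entrywiseFDeriv_symbol_momentum hA, hnorm, dotProduct_sub]
  have hposition :
      L ⬝ᵥ (fderiv ℝ H w (Pi.single j 1, 0) • R w -
        ∑ l, w.2 l • (entrywiseFDeriv (A l) w.1 (Pi.single j 1) *ᵥ R w)) = 0 := by
    simp [hfderiv, entrywiseFDeriv_symbol_position hA, hnorm, dotProduct_sub, Matrix.sum_mulVec,
      Matrix.smul_mulVec]
  simpa [hmomentum, hposition] using sum_ofReal_mul_neg_add_I_mul L
    (A j w.1 *ᵥ R w - fderiv ℝ H w (0, Pi.single j 1) • R w)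
    (fderiv ℝ H w (Pi.single j 1, 0) • R w -
      ∑ l, w.2 l • (entrywiseFDeriv (A l) w.1 (Pi.single j 1) *ᵥ R w))

/-- the solvability condition `Lᵀ F_j = 0` for
`F_j = −((A_j − ∂_{p_j}H) + i(∂_{q_j}H − Σ_l p_l ∂_{q_j}A_l)) R`,
for a smooth eigenvalue `H` of `Σ_l p_l A_l(q)` with biorthonormal eigenvectors `L, R`. -/
theorem stmt_12 (d M : ℕ)
    (A : Fin d → (Fin d → ℝ) → Matrix (Fin M) (Fin M) ℝ)
    (hA : ∀ l i j, ContDiff ℝ (⊤ : ℕ∞) (fun q => A l q i j))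
    (U : Set ((Fin d → ℝ) × (Fin d → ℝ))) (hU : IsOpen U)
    (H : (Fin d → ℝ) × (Fin d → ℝ) → ℝ)
    (R L : (Fin d → ℝ) × (Fin d → ℝ) → Fin M → ℝ)
    (hH : ContDiffOn ℝ (⊤ : ℕ∞) H U) (hR : ContDiffOn ℝ (⊤ : ℕ∞) R U) (hL : ContDiffOn ℝ (⊤ : ℕ∞) L U)
    (hRight : ∀ w ∈ U, (∑ l, w.2 l • A l w.1) *ᵥ R w = H w • R w)
    (hLeft : ∀ w ∈ U, L w ᵥ* (∑ l, w.2 l • A l w.1) = H w • L w)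
    (hNorm : ∀ w ∈ U, L w ⬝ᵥ R w = 1) :
    ∀ j : Fin d, ∀ w ∈ U,
      ∑ i, ((L w i : ℝ) : ℂ) *
        (-((((A j w.1 *ᵥ R w) i : ℝ) : ℂ)
            - ((fderiv ℝ H w (0, Pi.single j 1) : ℝ) : ℂ) * ((R w i : ℝ) : ℂ)
          + Complex.I * (((fderiv ℝ H w (Pi.single j 1, 0) : ℝ) : ℂ) * ((R w i : ℝ) : ℂ)
            - ∑ l, ((w.2 l : ℝ) : ℂ) *
              ((((Matrix.of fun i' k => fderiv ℝ (fun q => A l q i' k) w.1 (Pi.single j 1))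
                  *ᵥ R w) i : ℝ) : ℂ)))) = 0 := by
  intro j w hw
  exact (stmt_12_general (fun l i k => (hA l i k).differentiable (by simp) w.1)
    (hR.continuousOn.continuousAt (hU.mem_nhds hw))
    (eventually_of_mem (hU.mem_nhds hw) hRight) (hLeft w hw) (hNorm w hw)).2 j
end
end

section
/- Let d ≥ 1 and r > 0, and let A_0 : ℝ^d → ℂ and S_0 : ℝ^d → ℝ be smooth and compactly supported. For ε > 0 define ψ_0(q,p) = ∫_{ℝ^d} e^{−|y−q|²/(2ε)} e^{i(−p·(y−q) + r S_0(y))/ε} A_0(y) dy. Then for every positive integer N there exists a constant C > 0, depending only on N, d, r, A_0, S_0, such that for all ε ∈ (0,1] and all (q,p) ∈ ℝ^d × ℝ^d with p ≠ r ∇S_0(q): |ψ_0(q,p)| ≤ C ε^{(N+1)/2} / |p − r ∇S_0(q)|^N. -/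
open MeasureTheory

noncomputable section

/-! With `h = √ε` and `y = q + h z`, subtracting the affine part at `q` of the phase
`-‖y‖²/2 + i r S₀(y)` turns the transform into `h ^ d` times a unimodular factor times the Fourier
transform, at the frequency `(p - r ∇S₀(q)) / (2πh)`, of
`z ↦ exp(-‖z‖²/2 + i R(z)) A₀(q + h z)`, where `R` is the Taylor remainder of `r S₀` divided by
`h²`. Since `R` has second-order derivatives and higher bounded uniformly in `q` and `h ≤ 1`, and
`∇R(0) = 0`, the derivatives of this function are `O((1 + ‖z‖)^N e^{-‖z‖²/2})` with constants
independent of `h` and `q`, so its Fourier transform decays uniformly like `‖w‖^{-N}`. -/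

open Set Complex Module
open scoped ContDiff FourierTransform Gradient RealInnerProductSpace

section BoundedDerivs

variable {E F G : Type*} [NormedAddCommGroup E] [NormedSpace ℝ E]
  [NormedAddCommGroup F] [NormedSpace ℝ F] [NormedAddCommGroup G] [NormedSpace ℝ G]

/-- `f` is smooth and its derivatives of order at least `k` are bounded. For `k = 0` this is the
class `C_b^∞` of amplitudes, for `k = 2` the class of subquadratic phases. -/
def BoundedDerivsFrom (k : ℕ) (f : E → F) : Prop :=
  ContDiff ℝ ∞ f ∧ ∀ n, k ≤ n → ∃ C, ∀ x, ‖iteratedFDeriv ℝ n f x‖ ≤ C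

namespace BoundedDerivsFrom

variable {k : ℕ} {f g : E → F}

lemma exists_uniform_bound (hf : BoundedDerivsFrom k f) (N : ℕ) :
    ∃ C, 1 ≤ C ∧ ∀ n, k ≤ n → n ≤ N → ∀ x, ‖iteratedFDeriv ℝ n f x‖ ≤ C := by
  choose! C hC using hf.2
  refine ⟨1 + ∑ n ∈ Finset.range (N + 1), |C n|, by simpa using by positivity,
    fun n hkn hnN x => ?_⟩
  have hn : |C n| ≤ ∑ m ∈ Finset.range (N + 1), |C m| :=
    Finset.single_le_sum (fun m _ => abs_nonneg (C m)) (Finset.mem_range_succ_iff.2 hnN)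
  linarith [hC n hkn x, le_abs_self (C n)]

lemma of_hasCompactSupport (hf : ContDiff ℝ ∞ f) (hfc : HasCompactSupport f) (k : ℕ) :
    BoundedDerivsFrom k f :=
  ⟨hf, fun n _ => (hfc.iteratedFDeriv n).exists_bound_of_continuous
    (hf.continuous_iteratedFDeriv (mod_cast le_top))⟩

lemma of_fderiv (hf : ContDiff ℝ ∞ f) (hf' : BoundedDerivsFrom k (fderiv ℝ f)) :
    BoundedDerivsFrom (k + 1) f := by
  refine ⟨hf, fun n hn => ?_⟩
  obtain ⟨m, rfl⟩ := Nat.exists_eq_add_of_le' (Nat.one_le_of_lt hn)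
  simpa only [norm_iteratedFDeriv_fderiv] using hf'.2 m (by lia)

lemma const (c : F) : BoundedDerivsFrom 0 (fun _ : E => c) :=
  ⟨contDiff_const, fun n _ => by
    rcases n with _ | n
    · exact ⟨‖c‖, fun x => by simp⟩
    · exact ⟨0, fun x => by simp [iteratedFDeriv_succ_const]⟩⟩

lemma clm (L : E →L[ℝ] F) : BoundedDerivsFrom 1 L :=
  of_fderiv L.contDiff (by simpa only [funext fun x => L.fderiv (x := x)] using const L)

lemma add (hf : BoundedDerivsFrom k f) (hg : BoundedDerivsFrom k g) :
    BoundedDerivsFrom k (fun x => f x + g x) := by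
  refine ⟨hf.1.add hg.1, fun n hn => ?_⟩
  obtain ⟨C, hC⟩ := hf.2 n hn
  obtain ⟨D, hD⟩ := hg.2 n hn
  refine ⟨C + D, fun x => ?_⟩
  rw [fun_iteratedFDeriv_add_apply (hf.1.of_le (mod_cast le_top)).contDiffAt
    (hg.1.of_le (mod_cast le_top)).contDiffAt]
  exact norm_add_le_of_le (hC x) (hD x)

lemma clm_comp (hf : BoundedDerivsFrom k f) (L : F →L[ℝ] G) :
    BoundedDerivsFrom k (fun x => L (f x)) := by
  refine ⟨L.contDiff.comp hf.1, fun n hn => ?_⟩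
  obtain ⟨C, hC⟩ := hf.2 n hn
  exact ⟨‖L‖ * C, fun x =>
    (L.norm_iteratedFDeriv_comp_left hf.1.contDiffAt (mod_cast le_top)).trans
      (by gcongr; exact hC x)⟩

lemma comp_clm {f : F → G} (hf : BoundedDerivsFrom k f) (L : E →L[ℝ] F) :
    BoundedDerivsFrom k (fun x => f (L x)) := by
  refine ⟨hf.1.comp L.contDiff, fun n hn => ?_⟩
  obtain ⟨C, hC⟩ := hf.2 n hn
  refine ⟨C * ‖L‖ ^ n, fun x => ?_⟩
  have hcomp := L.iteratedFDeriv_comp_right hf.1 x (i := n) (mod_cast le_top)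
  calc ‖iteratedFDeriv ℝ n (f ∘ L) x‖
      ≤ ‖iteratedFDeriv ℝ n f (L x)‖ * ∏ _i : Fin n, ‖L‖ := by
        rw [hcomp]; exact ContinuousMultilinearMap.norm_compContinuousLinearMap_le _ _
    _ ≤ C * ‖L‖ ^ n := by
        rw [Finset.prod_const, Finset.card_univ, Fintype.card_fin]; gcongr; exact hC (L x)

end BoundedDerivsFrom

lemma boundedDerivsFrom_norm_sq (V : Type*) [NormedAddCommGroup V] [InnerProductSpace ℝ V] :
    BoundedDerivsFrom 2 (fun x : V => ‖x‖ ^ 2) :=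
  .of_fderiv (contDiff_norm_sq ℝ)
    (by simpa only [fderiv_norm_sq] using! BoundedDerivsFrom.clm (2 • innerSL ℝ (E := V)))

end BoundedDerivs

section IteratedDerivatives

variable {E F : Type*} [NormedAddCommGroup E] [NormedSpace ℝ E]
  [NormedAddCommGroup F] [NormedSpace ℝ F]

lemma norm_iteratedFDeriv_comp_add_smul {f : E → F} {n : ℕ}
    (hf : ContDiff ℝ n f) (q : E) (h : ℝ) (z : E) :
    ‖iteratedFDeriv ℝ n (fun z => f (q + h • z)) z‖ =
      |h| ^ n * ‖iteratedFDeriv ℝ n f (q + h • z)‖ := by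
  have hshift : ContDiff ℝ n (fun x => f (q + x)) := hf.comp (contDiff_const.add contDiff_id)
  rw [iteratedFDeriv_comp_const_smul h hshift, norm_smul, norm_pow, Real.norm_eq_abs,
    iteratedFDeriv_comp_add_left]

lemma norm_iteratedFDeriv_smul_le_of_forall_le {𝕜 : Type*} [NormedField 𝕜] [NormedAlgebra ℝ 𝕜]
    [NormedSpace 𝕜 F] [IsScalarTower ℝ 𝕜 F] {f : E → 𝕜} {g : E → F} {n : ℕ}
    {x : E} {a b : ℝ} (hf : ContDiff ℝ n f) (hg : ContDiff ℝ n g)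
    (ha : ∀ i ≤ n, ‖iteratedFDeriv ℝ i f x‖ ≤ a) (hb : ∀ i ≤ n, ‖iteratedFDeriv ℝ i g x‖ ≤ b) :
    ‖iteratedFDeriv ℝ n (fun y => f y • g y) x‖ ≤ 2 ^ n * (a * b) := by
  have ha0 : 0 ≤ a := (norm_nonneg _).trans (ha 0 n.zero_le)
  calc ‖iteratedFDeriv ℝ n (fun y => f y • g y) x‖
      ≤ ∑ i ∈ Finset.range (n + 1),
          (n.choose i : ℝ) * ‖iteratedFDeriv ℝ i f x‖ * ‖iteratedFDeriv ℝ (n - i) g x‖ :=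
        norm_iteratedFDeriv_smul_le hf hg x le_rfl
    _ ≤ ∑ i ∈ Finset.range (n + 1), (n.choose i : ℝ) * a * b := by
        gcongr with i hi
        · exact ha i (Finset.mem_range_succ_iff.1 hi)
        · exact hb (n - i) (n.sub_le i)
    _ = 2 ^ n * (a * b) := by
        rw [← Finset.sum_mul, ← Finset.sum_mul, mul_assoc]
        exact_mod_cast congrArg (fun m : ℕ => (m : ℝ) * (a * b)) n.sum_range_choose

lemma norm_iteratedFDeriv_cexp_le (n : ℕ) (w : ℂ) : ‖iteratedFDeriv ℝ n cexp w‖ ≤ ‖cexp w‖ := by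
  induction n with
  | zero => simp
  | succ n ih =>
    have hfderiv : fderiv ℝ cexp = ContinuousLinearMap.mul ℝ ℂ ∘ cexp := by
      ext z w
      simp [((Complex.hasDerivAt_exp z).hasFDerivAt.restrictScalars ℝ).fderiv, mul_comm]
    calc ‖iteratedFDeriv ℝ (n + 1) cexp w‖
        = ‖iteratedFDeriv ℝ n (ContinuousLinearMap.mul ℝ ℂ ∘ cexp) w‖ := by
          rw [← norm_iteratedFDeriv_fderiv, hfderiv]
      _ ≤ ‖ContinuousLinearMap.mul ℝ ℂ‖ * ‖iteratedFDeriv ℝ n cexp w‖ :=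
          (ContinuousLinearMap.mul ℝ ℂ).norm_iteratedFDeriv_comp_left
            Complex.contDiff_exp.contDiffAt le_rfl
      _ ≤ 1 * ‖cexp w‖ := by
          gcongr
          exact ContinuousLinearMap.opNorm_mul_le ℝ ℂ
      _ = ‖cexp w‖ := one_mul _

end IteratedDerivatives

section TaylorRemainder

variable {E F : Type*} [NormedAddCommGroup E] [NormedSpace ℝ E]
  [NormedAddCommGroup F] [NormedSpace ℝ F]

/-- The first-order Taylor remainder of `f` at `q` in the variable `z = (y - q) / h`, divided by
`h ^ 2`. -/
def rescaledTaylorRemainder (f : E → F) (h : ℝ) (q z : E) : F :=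
  (h ^ 2)⁻¹ • (f (q + h • z) - f q - h • fderiv ℝ f q z)

lemma contDiff_rescaledTaylorRemainder {f : E → F} {n : ℕ∞ω} (hf : ContDiff ℝ n f) (h : ℝ) (q : E) :
    ContDiff ℝ n (rescaledTaylorRemainder f h q) := by
  unfold rescaledTaylorRemainder
  fun_prop

lemma fderiv_rescaledTaylorRemainder {f : E → F} (hf : Differentiable ℝ f) {h : ℝ} (hh : h ≠ 0)
    (q z : E) :
    fderiv ℝ (rescaledTaylorRemainder f h q) z =
      h⁻¹ • (fderiv ℝ f (q + h • z) - fderiv ℝ f q) := by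
  have hline : HasFDerivAt (fun z => q + h • z) (h • ContinuousLinearMap.id ℝ E) z :=
    ((hasFDerivAt_id z).const_smul h).const_add q
  have hcomp := (hf (q + h • z)).hasFDerivAt.comp z hline
  have hrem := ((hcomp.sub_const (f q)).sub
    ((fderiv ℝ f q).hasFDerivAt.const_smul h)).const_smul (h ^ 2)⁻¹
  refine (HasFDerivAt.fderiv (f := rescaledTaylorRemainder f h q) hrem).trans ?_
  ext v
  simp only [smul_apply, sub_apply, ContinuousLinearMap.comp_apply, ContinuousLinearMap.id_apply,
    map_smul, ← smul_sub, smul_smul]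
  congr 1
  field_simp

lemma norm_fderiv_rescaledTaylorRemainder_le {f : E → F} {K : ℝ} (hf : ContDiff ℝ 2 f)
    (hK : ∀ x, ‖iteratedFDeriv ℝ 2 f x‖ ≤ K) {h : ℝ} (hh : h ≠ 0) (q z : E) :
    ‖fderiv ℝ (rescaledTaylorRemainder f h q) z‖ ≤ K * ‖z‖ := by
  have hf' : Differentiable ℝ (fderiv ℝ f) :=
    (hf.fderiv_right (m := 1) (by norm_num)).differentiable one_ne_zero
  have hK' : ∀ x, ‖fderiv ℝ (fderiv ℝ f) x‖ ≤ K := fun x => by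
    rw [← norm_iteratedFDeriv_one, norm_iteratedFDeriv_fderiv]
    exact hK x
  have hmean : ‖fderiv ℝ f (q + h • z) - fderiv ℝ f q‖ ≤ K * ‖h • z‖ := by
    simpa using convex_univ.norm_image_sub_le_of_norm_fderiv_le (fun x _ => hf' x)
      (fun x _ => hK' x) (mem_univ q) (mem_univ (q + h • z))
  rw [fderiv_rescaledTaylorRemainder (hf.differentiable two_ne_zero) hh, norm_smul, norm_inv,
    inv_mul_le_iff₀ (norm_pos_iff.2 hh)]
  calc _ ≤ K * ‖h • z‖ := hmean
    _ = ‖h‖ * (K * ‖z‖) := by rw [norm_smul]; ring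

lemma norm_iteratedFDeriv_add_two_rescaledTaylorRemainder {f : E → F} {n : ℕ}
    (hf : ContDiff ℝ (n + 2) f) {h : ℝ} (hh : h ≠ 0) (q z : E) :
    ‖iteratedFDeriv ℝ (n + 2) (rescaledTaylorRemainder f h q) z‖ =
      |h| ^ n * ‖iteratedFDeriv ℝ (n + 2) f (q + h • z)‖ := by
  have hf' : ContDiff ℝ (n + 1 : ℕ) (fderiv ℝ f) :=
    hf.fderiv_right (by norm_cast)
  have hfq : ContDiff ℝ (n + 1 : ℕ) (fun z => fderiv ℝ f (q + h • z)) := by fun_prop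
  have hfderiv : fderiv ℝ (rescaledTaylorRemainder f h q) =
      fun z => h⁻¹ • (fderiv ℝ f (q + h • z) - fderiv ℝ f q) :=
    funext (fderiv_rescaledTaylorRemainder (hf.differentiable (by simp)) hh q)
  rw [← norm_iteratedFDeriv_fderiv, hfderiv,
    iteratedFDeriv_const_smul_apply' (hfq.sub contDiff_const).contDiffAt,
    fun_iteratedFDeriv_sub_apply hfq.contDiffAt contDiff_const.contDiffAt,
    iteratedFDeriv_succ_const, Pi.zero_apply, sub_zero, norm_smul, norm_inv, Real.norm_eq_abs,
    norm_iteratedFDeriv_comp_add_smul hf', norm_iteratedFDeriv_fderiv, pow_succ']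
  field_simp

lemma BoundedDerivsFrom.exists_norm_iteratedFDeriv_rescaledTaylorRemainder_le {f : E → F}
    (hf : BoundedDerivsFrom 2 f) (N : ℕ) :
    ∃ K, 1 ≤ K ∧ ∀ h ∈ Ioc (0 : ℝ) 1, ∀ q z, ∀ n, 1 ≤ n → n ≤ N →
      ‖iteratedFDeriv ℝ n (rescaledTaylorRemainder f h q) z‖ ≤ (K * (1 + ‖z‖)) ^ n := by
  obtain ⟨K, hK1, hK⟩ := hf.exists_uniform_bound (N + 2)
  refine ⟨K, hK1, fun h hh q z n hn hnN => ?_⟩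
  have hz : 0 ≤ ‖z‖ := norm_nonneg z
  suffices hlin : ‖iteratedFDeriv ℝ n (rescaledTaylorRemainder f h q) z‖ ≤ K * (1 + ‖z‖) from
    hlin.trans (le_self_pow₀ (by nlinarith) (by lia))
  obtain rfl | ⟨m, rfl⟩ : n = 1 ∨ ∃ m, n = m + 2 := by
    rcases n with _ | _ | m
    · lia
    · exact .inl rfl
    · exact .inr ⟨m, rfl⟩
  · rw [norm_iteratedFDeriv_one]
    have := norm_fderiv_rescaledTaylorRemainder_le (contDiff_infty.1 hf.1 2)
      (hK 2 le_rfl (by lia)) hh.1.ne' q z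
    linarith
  · rw [norm_iteratedFDeriv_add_two_rescaledTaylorRemainder (contDiff_infty.1 hf.1 (m + 2))
      hh.1.ne', abs_of_pos hh.1]
    calc h ^ m * ‖iteratedFDeriv ℝ (m + 2) f (q + h • z)‖
        ≤ 1 * K := by
          gcongr
          · exact pow_le_one₀ hh.1.le hh.2
          · exact hK (m + 2) (by lia) (by lia) _
      _ ≤ K * (1 + ‖z‖) := by nlinarith

end TaylorRemainder

section Rescaling

variable {E F : Type*} [NormedAddCommGroup E] [NormedSpace ℝ E] [FiniteDimensional ℝ E]
  [MeasurableSpace E] [BorelSpace E] [NormedAddCommGroup F] [NormedSpace ℝ F]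

lemma integral_eq_smul_integral_comp_add_smul (μ : Measure E) [μ.IsAddHaarMeasure] (f : E → F)
    {h : ℝ} (hh : 0 < h) (q : E) :
    ∫ y, f y ∂μ = h ^ finrank ℝ E • ∫ z, f (q + h • z) ∂μ := by
  rw [Measure.integral_comp_smul μ (fun x => f (q + x)), integral_add_left_eq_self f q,
    abs_of_pos (by positivity), smul_inv_smul₀ (by positivity)]

end Rescaling

section Fourier

variable {E F : Type*} [NormedAddCommGroup E] [InnerProductSpace ℝ E] [FiniteDimensional ℝ E]
  [MeasurableSpace E] [BorelSpace E] [NormedAddCommGroup F] [NormedSpace ℂ F]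

lemma norm_pow_mul_norm_fourier_le_of_norm_iteratedFDeriv_le {f : E → F} {g : E → ℝ} {N : ℕ}
    (hf : ContDiff ℝ N f) (hg : Integrable g)
    (hfg : ∀ n ≤ N, ∀ x, ‖iteratedFDeriv ℝ n f x‖ ≤ g x) (w : E) :
    ‖w‖ ^ N * ‖𝓕 f w‖ ≤ 2 ^ N * ((N + 1) * ∫ x, g x) := by
  have hint : ∀ n ≤ N, Integrable (fun x => ‖iteratedFDeriv ℝ n f x‖) := fun n hn =>
    hg.mono' (hf.continuous_iteratedFDeriv (mod_cast hn)).norm.aestronglyMeasurable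
      (.of_forall fun x => by simpa using hfg n hn x)
  have hfourier := Real.pow_mul_norm_iteratedFDeriv_fourier_le (K := 0) (N := N) hf
    (fun k n hk hn => by
      obtain rfl : k = 0 := by simpa using hk
      simpa using hint n (mod_cast hn)) (k := 0) (n := N) le_rfl le_rfl w
  calc ‖w‖ ^ N * ‖𝓕 f w‖
      ≤ 2 ^ N * ∑ n ∈ Finset.range (N + 1), ∫ x, ‖iteratedFDeriv ℝ n f x‖ := by
        simpa [Finset.sum_product] using hfourier
    _ ≤ 2 ^ N * ∑ _n ∈ Finset.range (N + 1), ∫ x, g x := by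
        gcongr with n hn
        · exact hint n (Finset.mem_range_succ_iff.1 hn)
        · exact fun x => hfg n (Finset.mem_range_succ_iff.1 hn) x
    _ = 2 ^ N * ((N + 1) * ∫ x, g x) := by simp

lemma integrable_one_add_norm_pow_mul_exp_neg_mul_norm_sq {b : ℝ} (hb : 0 < b) (n : ℕ) :
    Integrable (fun x : E => (1 + ‖x‖) ^ n * Real.exp (-b * ‖x‖ ^ 2)) := by
  have hgauss : Integrable (fun x : E => Real.exp (-(b / 2) * ‖x‖ ^ 2)) := by
    have := GaussianFourier.integrable_cexp_neg_mul_sq_norm_add (V := E) (b := (b / 2 : ℝ))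
      (by simpa using half_pos hb) 0 0
    simpa [Complex.norm_exp, ← ofReal_pow] using this.norm
  have hexp (t : ℝ) : 1 + t - b * t ^ 2 ≤ 1 + 1 / (2 * b) - b / 2 * t ^ 2 := by
    have hsq : 1 / (2 * b) - t + b / 2 * t ^ 2 = (b * t - 1) ^ 2 / (2 * b) := by
      field_simp
      ring
    linarith [show 0 ≤ (b * t - 1) ^ 2 / (2 * b) by positivity]
  refine (hgauss.const_mul (n.factorial * Real.exp (1 + 1 / (2 * b)))).mono'
    (by fun_prop) (.of_forall fun x => ?_)
  have hpow : (1 + ‖x‖) ^ n ≤ n.factorial * Real.exp (1 + ‖x‖) :=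
    (div_le_iff₀' (by positivity)).1 (Real.pow_div_factorial_le_exp _ (by positivity) n)
  rw [Real.norm_of_nonneg (by positivity)]
  calc (1 + ‖x‖) ^ n * Real.exp (-b * ‖x‖ ^ 2)
      ≤ n.factorial * Real.exp (1 + ‖x‖) * Real.exp (-b * ‖x‖ ^ 2) := by gcongr
    _ = n.factorial * Real.exp (1 + ‖x‖ - b * ‖x‖ ^ 2) := by
        rw [mul_assoc, ← Real.exp_add]; ring_nf
    _ ≤ n.factorial * Real.exp (1 + 1 / (2 * b) - b / 2 * ‖x‖ ^ 2) := by
        gcongr n.factorial * Real.exp ?_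
        exact hexp ‖x‖
    _ = n.factorial * Real.exp (1 + 1 / (2 * b)) * Real.exp (-(b / 2) * ‖x‖ ^ 2) := by
        rw [mul_assoc, ← Real.exp_add]; ring_nf

end Fourier

section WavePacket

variable {E F : Type*} [NormedAddCommGroup E] [InnerProductSpace ℝ E]
  [NormedAddCommGroup F] [NormedSpace ℂ F]

/-- The complex phase `-‖y‖²/2 + i S(y)`. The rescaled Taylor remainder of its quadratic part is
`-‖z‖²/2` at every point `q` and every scale `h`, which is where the Gaussian comes from. -/
def gaussianPhase (S : E → ℝ) (y : E) : ℂ := -(‖y‖ ^ 2 : ℝ) / 2 + I * S y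

/-- The wave-packet integrand in the variable `z = (y - q) / h`, with the affine part of its phase
removed. -/
def rescaledWavePacket (A : E → F) (S : E → ℝ) (h : ℝ) (q z : E) : F :=
  cexp (rescaledTaylorRemainder (gaussianPhase S) h q z) • A (q + h • z)

lemma boundedDerivsFrom_gaussianPhase {S : E → ℝ} (hS : BoundedDerivsFrom 2 S) :
    BoundedDerivsFrom 2 (gaussianPhase S) := by
  have hnorm := (boundedDerivsFrom_norm_sq E).clm_comp ((-1 / 2 : ℝ) • ofRealCLM)
  have hosc := hS.clm_comp (I • ofRealCLM)
  convert! hnorm.add hosc using 2 with y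
  simp [gaussianPhase]
  ring

lemma rescaledTaylorRemainder_gaussianPhase {S : E → ℝ} (hS : Differentiable ℝ S) {h : ℝ}
    (hh : h ≠ 0) (q z : E) :
    rescaledTaylorRemainder (gaussianPhase S) h q z =
      -(‖z‖ ^ 2 : ℝ) / 2 + I * rescaledTaylorRemainder S h q z := by
  have hnorm : HasFDerivAt (fun y : E => ((‖y‖ ^ 2 : ℝ) : ℂ)) _ q :=
    ofRealCLM.hasFDerivAt.comp q (hasStrictFDerivAt_norm_sq q).hasFDerivAt
  have hosc : HasFDerivAt (fun y : E => (S y : ℂ)) _ q :=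
    ofRealCLM.hasFDerivAt.comp q (hS q).hasFDerivAt
  have hphase : fderiv ℝ (gaussianPhase S) q z = -(inner ℝ q z : ℝ) + I * fderiv ℝ S q z := by
    have : HasFDerivAt (gaussianPhase S) _ q :=
      (hnorm.fun_neg.mul_const (2⁻¹ : ℂ)).fun_add (hosc.const_mul I)
    rw [this.fderiv]
    simp
  have hsq : ‖q + h • z‖ ^ 2 = ‖q‖ ^ 2 + 2 * h * inner ℝ q z + h ^ 2 * ‖z‖ ^ 2 := by
    rw [norm_add_sq_real, inner_smul_right, norm_smul, mul_pow, Real.norm_eq_abs, sq_abs]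
    ring
  have hhc : (h : ℂ) ≠ 0 := ofReal_ne_zero.2 hh
  simp only [rescaledTaylorRemainder, hphase, gaussianPhase, hsq, real_smul, smul_eq_mul]
  push_cast
  field_simp
  ring

lemma norm_cexp_rescaledTaylorRemainder_gaussianPhase {S : E → ℝ} (hS : Differentiable ℝ S) {h : ℝ}
    (hh : h ≠ 0) (q z : E) :
    ‖cexp (rescaledTaylorRemainder (gaussianPhase S) h q z)‖ = Real.exp (-(1 / 2) * ‖z‖ ^ 2) := by
  rw [rescaledTaylorRemainder_gaussianPhase hS hh, Complex.norm_exp]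
  congr 1
  simp [-ofReal_pow]
  ring

lemma contDiff_rescaledWavePacket {A : E → F} {S : E → ℝ} (hA : BoundedDerivsFrom 0 A)
    (hS : BoundedDerivsFrom 2 S) (h : ℝ) (q : E) :
    ContDiff ℝ ∞ (rescaledWavePacket A S h q) :=
  (contDiff_rescaledTaylorRemainder (boundedDerivsFrom_gaussianPhase hS).1 h q).cexp.smul
    (hA.1.comp (contDiff_const.add (contDiff_id.const_smul h)))

lemma exists_norm_iteratedFDeriv_rescaledWavePacket_le {A : E → F} {S : E → ℝ}
    (hA : BoundedDerivsFrom 0 A) (hS : BoundedDerivsFrom 2 S) (N : ℕ) :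
    ∃ M, ∀ h ∈ Ioc (0 : ℝ) 1, ∀ q z, ∀ n ≤ N,
      ‖iteratedFDeriv ℝ n (rescaledWavePacket A S h q) z‖ ≤
        M * ((1 + ‖z‖) ^ N * Real.exp (-(1 / 2) * ‖z‖ ^ 2)) := by
  have hΦ := boundedDerivsFrom_gaussianPhase hS
  obtain ⟨K, hK1, hK⟩ := hΦ.exists_norm_iteratedFDeriv_rescaledTaylorRemainder_le N
  obtain ⟨a, ha1, ha⟩ := hA.exists_uniform_bound N
  refine ⟨2 ^ N * (N.factorial * K ^ N * a), fun h hh q z n hn => ?_⟩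
  have hD : 1 ≤ K * (1 + ‖z‖) := one_le_mul_of_one_le_of_one_le hK1 (by simp)
  set R := rescaledTaylorRemainder (gaussianPhase S) h q
  have hR : ContDiff ℝ ∞ R := contDiff_rescaledTaylorRemainder hΦ.1 h q
  have hexp : ∀ i ≤ n, ‖iteratedFDeriv ℝ i (fun z => cexp (R z)) z‖ ≤
      N.factorial * Real.exp (-(1 / 2) * ‖z‖ ^ 2) * (K * (1 + ‖z‖)) ^ N := fun i hi => by
    rw [← norm_cexp_rescaledTaylorRemainder_gaussianPhase (hS.1.differentiable (by simp)) hh.1.ne']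
    calc ‖iteratedFDeriv ℝ i (cexp ∘ R) z‖
        ≤ i.factorial * ‖cexp (R z)‖ * (K * (1 + ‖z‖)) ^ i :=
          norm_iteratedFDeriv_comp_le Complex.contDiff_exp hR (mod_cast le_top) z
            (fun j _ => norm_iteratedFDeriv_cexp_le j (R z))
            (fun j hj hji => hK h hh q z j hj (by lia))
      _ ≤ N.factorial * ‖cexp (R z)‖ * (K * (1 + ‖z‖)) ^ N := by
          gcongr
          all_goals lia
  have hamp : ∀ i ≤ n, ‖iteratedFDeriv ℝ i (fun z => A (q + h • z)) z‖ ≤ a := fun i hi => by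
    rw [norm_iteratedFDeriv_comp_add_smul (contDiff_infty.1 hA.1 i), abs_of_pos hh.1]
    exact (mul_le_of_le_one_left (norm_nonneg _) (pow_le_one₀ hh.1.le hh.2)).trans
      (ha i i.zero_le (hi.trans hn) _)
  calc ‖iteratedFDeriv ℝ n (rescaledWavePacket A S h q) z‖
      ≤ 2 ^ n * (N.factorial * Real.exp (-(1 / 2) * ‖z‖ ^ 2) * (K * (1 + ‖z‖)) ^ N * a) :=
        norm_iteratedFDeriv_smul_le_of_forall_le (contDiff_infty.1 hR.cexp n)
          ((contDiff_infty.1 hA.1 n).comp (contDiff_const.add (contDiff_id.const_smul h))) hexp hamp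
    _ ≤ 2 ^ N * (N.factorial * Real.exp (-(1 / 2) * ‖z‖ ^ 2) * (K * (1 + ‖z‖)) ^ N * a) := by
        gcongr
        norm_num
    _ = 2 ^ N * (N.factorial * K ^ N * a) * ((1 + ‖z‖) ^ N * Real.exp (-(1 / 2) * ‖z‖ ^ 2)) := by
        rw [mul_pow]; ring

variable [FiniteDimensional ℝ E] [MeasurableSpace E] [BorelSpace E]

/-- The Gaussian wave-packet transform at scale `ε` of the WKB datum `A e^{iS/ε}`. -/
def gaussianWavePacketTransform (ε : ℝ) (A : E → F) (S : E → ℝ) (q p : E) : F :=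
  ∫ y, (cexp (-(‖y - q‖ ^ 2 : ℝ) / (2 * ε)) * cexp (I * (-⟪p, y - q⟫ + S y : ℝ) / ε)) • A y

lemma gaussianWavePacketTransform_eq_smul_fourier [CompleteSpace E] (A : E → F) {S : E → ℝ}
    (hS : Differentiable ℝ S) {h : ℝ} (hh : 0 < h) (q p : E) :
    gaussianWavePacketTransform (h ^ 2) A S q p =
      h ^ finrank ℝ E • cexp (I * S q / h ^ 2) •
        𝓕 (rescaledWavePacket A S h q) ((2 * Real.pi * h)⁻¹ • (p - ∇ S q)) := by
  have hhc : (h : ℂ) ≠ 0 := ofReal_ne_zero.2 hh.ne'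
  rw [gaussianWavePacketTransform, integral_eq_smul_integral_comp_add_smul volume _ hh q,
    Real.fourier_eq', ← integral_smul (cexp _)]
  congr 1
  refine integral_congr_ae (.of_forall fun z => ?_)
  dsimp only
  have hgrad : ⟪z, p - ∇ S q⟫ = ⟪p, z⟫ - fderiv ℝ S q z := by
    rw [inner_sub_right, real_inner_comm p, real_inner_comm (∇ S q), inner_gradient_left]
  have hTaylor : (S (q + h • z) : ℂ) =
      S q + h * fderiv ℝ S q z + h ^ 2 * rescaledTaylorRemainder S h q z := by
    simp only [rescaledTaylorRemainder, smul_eq_mul]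
    push_cast
    field_simp
    ring
  rw [rescaledWavePacket, rescaledTaylorRemainder_gaussianPhase hS hh.ne', smul_smul, smul_smul,
    ← Complex.exp_add, ← Complex.exp_add, ← Complex.exp_add, add_sub_cancel_left, norm_smul,
    Real.norm_of_nonneg hh.le, inner_smul_right, inner_smul_right, hgrad]
  congr 2
  push_cast
  rw [hTaylor]
  field_simp
  ring

theorem exists_norm_pow_mul_norm_gaussianWavePacketTransform_le [CompleteSpace E] {A : E → F}
    {S : E → ℝ} (hA : BoundedDerivsFrom 0 A) (hS : BoundedDerivsFrom 2 S) (N : ℕ) :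
    ∃ C, ∀ h ∈ Ioc (0 : ℝ) 1, ∀ q p,
      ‖p - ∇ S q‖ ^ N * ‖gaussianWavePacketTransform (h ^ 2) A S q p‖ ≤
        C * h ^ (N + finrank ℝ E) := by
  obtain ⟨M, hM⟩ := exists_norm_iteratedFDeriv_rescaledWavePacket_le hA hS N
  set G : E → ℝ := fun z => M * ((1 + ‖z‖) ^ N * Real.exp (-(1 / 2) * ‖z‖ ^ 2))
  have hG : Integrable G :=
    (integrable_one_add_norm_pow_mul_exp_neg_mul_norm_sq one_half_pos N).const_mul M
  refine ⟨(2 * Real.pi) ^ N * (2 ^ N * ((N + 1) * ∫ z, G z)), fun h hh q p => ?_⟩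
  have hh0 : 0 < h := hh.1
  set w := (2 * Real.pi * h)⁻¹ • (p - ∇ S q) with hw
  have hfourier : ‖w‖ ^ N * ‖𝓕 (rescaledWavePacket A S h q) w‖ ≤ 2 ^ N * ((N + 1) * ∫ z, G z) :=
    norm_pow_mul_norm_fourier_le_of_norm_iteratedFDeriv_le
      (contDiff_infty.1 (contDiff_rescaledWavePacket hA hS h q) N) hG
      (fun n hn z => hM h hh q z n hn) w
  have hnorm : ‖p - ∇ S q‖ = 2 * Real.pi * h * ‖w‖ := by
    rw [hw, norm_smul, Real.norm_of_nonneg (by positivity), mul_inv_cancel_left₀ (by positivity)]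
  have hphase : ‖cexp (I * S q / h ^ 2)‖ = 1 := by
    rw [Complex.norm_exp, ← ofReal_pow, div_ofReal_re, I_mul_re, ofReal_im, neg_zero, zero_div,
      Real.exp_zero]
  calc ‖p - ∇ S q‖ ^ N * ‖gaussianWavePacketTransform (h ^ 2) A S q p‖
      = (2 * Real.pi) ^ N * (‖w‖ ^ N * ‖𝓕 (rescaledWavePacket A S h q) w‖) *
          h ^ (N + finrank ℝ E) := by
        rw [gaussianWavePacketTransform_eq_smul_fourier A (hS.1.differentiable (by simp)) hh0,
          norm_smul, norm_smul, hphase, hnorm, Real.norm_of_nonneg (by positivity), one_mul]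
        ring
    _ ≤ (2 * Real.pi) ^ N * (2 ^ N * ((N + 1) * ∫ z, G z)) * h ^ (N + finrank ℝ E) := by
        gcongr

end WavePacket

section Coordinates

variable {d : ℕ}

lemma gaussianWavePacketTransform_comp_ofLp (ε : ℝ) (A : (Fin d → ℝ) → ℂ) (S : (Fin d → ℝ) → ℝ)
    (q p : Fin d → ℝ) :
    gaussianWavePacketTransform ε (fun y : EuclideanSpace ℝ (Fin d) => A y.ofLp)
        (fun y => S y.ofLp) (WithLp.toLp 2 q) (WithLp.toLp 2 p) =
      ∫ y : Fin d → ℝ, cexp (-((∑ i, (y i - q i) ^ 2 : ℝ) : ℂ) / (2 * (ε : ℂ))) *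
        cexp (I * (((-(∑ i, p i * (y i - q i)) + S y : ℝ)) : ℂ) / (ε : ℂ)) * A y := by
  rw [gaussianWavePacketTransform, ← (PiLp.volume_preserving_toLp (Fin d)).integral_comp
    (MeasurableEquiv.toLp 2 _).measurableEmbedding]
  simp [EuclideanSpace.norm_sq_eq, PiLp.inner_apply, mul_comm]

lemma gradient_comp_ofLp (S : (Fin d → ℝ) → ℝ) (q : Fin d → ℝ) :
    ∇ (fun y : EuclideanSpace ℝ (Fin d) => S y.ofLp) (WithLp.toLp 2 q) =
      WithLp.toLp 2 (fun i => fderiv ℝ S q (Pi.single i 1)) := by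
  ext i
  have hcomp := congrArg (fun L => L (EuclideanSpace.single i 1))
    ((EuclideanSpace.equiv (Fin d) ℝ).comp_right_fderiv (f := S) (x := WithLp.toLp 2 q))
  calc (∇ (fun y : EuclideanSpace ℝ (Fin d) => S y.ofLp) (WithLp.toLp 2 q)) i
      = ⟪∇ (fun y : EuclideanSpace ℝ (Fin d) => S y.ofLp) (WithLp.toLp 2 q),
          EuclideanSpace.single i 1⟫ := by
        rw [EuclideanSpace.inner_single_right, conj_trivial, one_mul]
    _ = fderiv ℝ S q (Pi.single i 1) := by
        rw [inner_gradient_left]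
        exact hcomp

end Coordinates

theorem stmt_14_general {d : ℕ} (r : ℝ) {A0 : (Fin d → ℝ) → ℂ} {S0 : (Fin d → ℝ) → ℝ}
    (hA0 : BoundedDerivsFrom 0 A0) (hS0 : BoundedDerivsFrom 2 S0) (N : ℕ) :
    ∃ C > 0, ∀ ε ∈ Set.Ioc (0 : ℝ) 1, ∀ q p : Fin d → ℝ,
      p ≠ (fun i => r * fderiv ℝ S0 q (Pi.single i 1)) →
      norm (E := ℂ) (∫ y : Fin d → ℝ,
          Complex.exp (-((∑ i, (y i - q i) ^ 2 : ℝ) : ℂ) / (2 * (ε : ℂ)))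
            * Complex.exp (Complex.I *
                (((-(∑ i, p i * (y i - q i)) + r * S0 y : ℝ)) : ℂ) / (ε : ℂ))
            * A0 y)
        ≤ C * ε ^ (((N : ℝ) + d) / 2)
            / Real.sqrt (∑ i, (p i - r * fderiv ℝ S0 q (Pi.single i 1)) ^ 2) ^ N := by
  let L : EuclideanSpace ℝ (Fin d) →L[ℝ] (Fin d → ℝ) := EuclideanSpace.equiv (Fin d) ℝ
  let S : EuclideanSpace ℝ (Fin d) → ℝ := fun y => r * S0 y.ofLp
  have hS : BoundedDerivsFrom 2 S := (hS0.clm_comp (.mul ℝ ℝ r)).comp_clm L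
  obtain ⟨C, hC⟩ := exists_norm_pow_mul_norm_gaussianWavePacketTransform_le (hA0.comp_clm L) hS N
  refine ⟨max C 1, by positivity, fun ε hε q p hp => ?_⟩
  set g : Fin d → ℝ := fun i => r * fderiv ℝ S0 q (Pi.single i 1)
  have hgrad : ∇ S (WithLp.toLp 2 q) = WithLp.toLp 2 g := by
    rw [gradient_comp_ofLp (fun y => r * S0 y),
      fderiv_const_mul (hS0.1.differentiable (by simp)).differentiableAt]
    rfl
  have hdist : √(∑ i, (p i - g i) ^ 2) = ‖WithLp.toLp 2 p - WithLp.toLp 2 g‖ := by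
    simp [EuclideanSpace.norm_eq]
  have hpos : 0 < ‖WithLp.toLp 2 p - WithLp.toLp 2 g‖ :=
    norm_pos_iff.2 (sub_ne_zero.2 ((WithLp.toLp_injective 2).ne hp))
  have hpow : ε ^ (((N : ℝ) + d) / 2) = √ε ^ (N + d) := by
    rw [Real.rpow_div_two_eq_sqrt _ hε.1.le]
    exact_mod_cast Real.rpow_natCast √ε (N + d)
  have hbound := hC √ε ⟨Real.sqrt_pos.2 hε.1, Real.sqrt_le_one.2 hε.2⟩
    (WithLp.toLp 2 q) (WithLp.toLp 2 p)
  rw [Real.sq_sqrt hε.1.le, hgrad, finrank_euclideanSpace_fin] at hbound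
  rw [← gaussianWavePacketTransform_comp_ofLp ε A0 (fun y => r * S0 y), hdist, hpow,
    le_div_iff₀' (by positivity)]
  exact hbound.trans (by gcongr; exact le_max_left C 1)

/-- decay of the Gaussian wave-packet transform of a WKB datum away from the
submanifold `p = r∇S₀(q)`: for each `N ≥ 1` there is `C > 0` with
`|ψ₀(q,p)| ≤ C ε^{(N+1)/2} / |p − r∇S₀(q)|^N` for all `ε ∈ (0,1]`. -/
theorem stmt_14 (d : ℕ) (hd : 1 ≤ d) (r : ℝ) (hr : 0 < r)
    (A0 : (Fin d → ℝ) → ℂ) (S0 : (Fin d → ℝ) → ℝ)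
    (hA0 : ContDiff ℝ (⊤ : ℕ∞) A0) (hA0c : HasCompactSupport A0)
    (hS0 : ContDiff ℝ (⊤ : ℕ∞) S0) (hS0c : HasCompactSupport S0)
    (N : ℕ) (hN : 0 < N) :
    ∃ C > 0, ∀ ε ∈ Set.Ioc (0 : ℝ) 1, ∀ q p : Fin d → ℝ,
      p ≠ (fun i => r * fderiv ℝ S0 q (Pi.single i 1)) →
      norm (E := ℂ) (∫ y : Fin d → ℝ,
          Complex.exp (-((∑ i, (y i - q i) ^ 2 : ℝ) : ℂ) / (2 * (ε : ℂ)))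
            * Complex.exp (Complex.I *
                (((-(∑ i, p i * (y i - q i)) + r * S0 y : ℝ)) : ℂ) / (ε : ℂ))
            * A0 y)
        ≤ C * ε ^ (((N : ℝ) + 1) / 2)
            / Real.sqrt (∑ i, (p i - r * fderiv ℝ S0 q (Pi.single i 1)) ^ 2) ^ N := by
  obtain ⟨C, hC0, hC⟩ := stmt_14_general r (.of_hasCompactSupport hA0 hA0c 0)
    (.of_hasCompactSupport hS0 hS0c 2) N
  refine ⟨C, hC0, fun ε hε q p hp => (hC ε hε q p hp).trans ?_⟩
  have hrate : ε ^ (((N : ℝ) + d) / 2) ≤ ε ^ (((N : ℝ) + 1) / 2) :=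
    Real.rpow_le_rpow_of_exponent_ge hε.1 hε.2 (by gcongr; exact_mod_cast hd)
  gcongr
end
end
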